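/- arXiv:1705.02606 — 2 statements merged into one kernel-verified Lean document; each statement's English description precedes it below -/
import Mathlib

section
/- Let k be a Hilbertian field. Then every finite group G occurs as the automorphism group of infinitely many distinct finite field extensions of k. -/
/-- A field `k` is *Hilbertian* if Hilbert's irreducibility theorem holds over `k`:
for every polynomial `P(T,X) ∈ k[T][X]` which is irreducible over the rational function
field `k(T)`, there are infinitely many specializations `t₀ ∈ k` such that `P(t₀,X)` is
irreducible over `k`. -/
def IsHilbertian (k : Type*) [Field k] : Prop :=
  ∀ P : Polynomial (Polynomial k),
    Irreducible (P.map (algebraMap (Polynomial k) (RatFunc k))) →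
    {t₀ : k | Irreducible (P.map (Polynomial.evalRingHom t₀))}.Infinite

/-!
Every finite group `G` is the Weyl group `N(H) / H` of subgroups `H` of symmetric groups, of
arbitrarily large index. If `F / k` is Galois with group `S_n`, the fixed field `L` of `H ≤ S_n` has
`Aut(L / k) ≃ N(H) / H ≃ G` and degree equal to the index of `H`, so it remains to realize
`S_n` over `k` for `n ≥ 3`.

For this, interpolate a monic `f(T, X)` of degree `n` which, for each `2 ≤ d ≤ n`, has a separable
specialization with one irreducible factor of degree `d` and otherwise linear factors. Lifting
automorphisms from such a specialization to the integral closure of `k[T]` in the splitting field of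
`f` gives elements of the Galois group of `f` that act transitively on `d` of the roots and fix the
others. The cases `d = n, n - 1, 2` make the group transitive, doubly transitive and contain a
transposition, so it is `S_n`; by Hilbertianity some specialization of the splitting field keeps the
full Galois group.
-/

open scoped Polynomial

theorem nonempty_powersetCard {α : Type*} [Fintype α] {r : ℕ} (h : r ≤ Fintype.card α) :
    Nonempty (Set.powersetCard α r) :=
  let ⟨A, hA⟩ := Finset.exists_subset_card_eq (s := (Finset.univ : Finset α)) h
  ⟨A, hA.2⟩

theorem lt_choose_of_two_mul_lt {m r : ℕ} (two_le : 2 ≤ r) (hr : 2 * r < m) : m < m.choose r := by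
  induction r, two_le using Nat.le_induction with
  | base =>
    obtain ⟨t, rfl⟩ : ∃ t, m = t + 5 := ⟨m - 5, by lia⟩
    rw [Nat.choose_two_right, Nat.add_sub_assoc (by lia : 1 ≤ 5), Nat.lt_iff_add_one_le,
      Nat.le_div_iff_mul_le two_pos]
    nlinarith
  | succ r _ ih => exact (ih (by lia)).trans_le (Nat.choose_le_succ_of_lt_half_left (by lia))

section StabilizerOfSubset

open scoped Pointwise

variable {α : Type*} [DecidableEq α]

theorem subset_of_stabilizer_le {A B : Finset α} {b : α} (hbA : b ∉ A) (hbB : b ∉ B)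
    (h : MulAction.stabilizer (Equiv.Perm α) B ≤ MulAction.stabilizer (Equiv.Perm α) A) :
    A ⊆ B := by
  intro a haA
  by_contra haB
  have swap_mem : Equiv.swap a b ∈ MulAction.stabilizer (Equiv.Perm α) B :=
    (Finset.image_congr fun x hx => Equiv.swap_apply_of_ne_of_ne (ne_of_mem_of_not_mem hx haB)
      (ne_of_mem_of_not_mem hx hbB)).trans Finset.image_id
  refine hbA ?_
  rw [← MulAction.mem_stabilizer_iff.1 (h swap_mem)]
  exact Finset.mem_smul_finset.2 ⟨a, haA, Equiv.swap_apply_left a b⟩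

theorem eq_of_stabilizer_eq [Fintype α] {A B : Finset α} (hA : 2 * A.card < Fintype.card α)
    (hB : 2 * B.card < Fintype.card α)
    (h : MulAction.stabilizer (Equiv.Perm α) A = MulAction.stabilizer (Equiv.Perm α) B) :
    A = B := by
  obtain ⟨b, hb⟩ : ∃ b, b ∉ A ∪ B := by
    by_contra! hcover
    have := Finset.card_union_le A B
    rw [Finset.eq_univ_iff_forall.2 hcover, Finset.card_univ] at this
    lia
  rw [Finset.mem_union, not_or] at hb
  exact (subset_of_stabilizer_le hb.1 hb.2 h.ge).antisymm (subset_of_stabilizer_le hb.2 hb.1 h.le)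

theorem eq_of_pi_smul_eq_iff [Fintype α] {ι : Type*} {F F' : ι → Finset α}
    (hF : ∀ x, 2 * (F x).card < Fintype.card α) (hF' : ∀ x, 2 * (F' x).card < Fintype.card α)
    (h : ∀ u : ι → Equiv.Perm α, u • F = F ↔ u • F' = F') : F = F' := by
  classical
  funext x
  refine eq_of_stabilizer_eq (hF x) (hF' x) ?_
  have mulSingle_smul (p : Equiv.Perm α) (E : ι → Finset α) :
      (Pi.mulSingle x p : ι → Equiv.Perm α) • E = E ↔ p • E x = E x := by
    refine ⟨fun hp => by simpa using congrFun hp x, fun hp => funext fun y => ?_⟩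
    obtain rfl | hyx := eq_or_ne y x
    · simpa using hp
    · simp [hyx]
  ext p
  rw [MulAction.mem_stabilizer_iff, MulAction.mem_stabilizer_iff, ← mulSingle_smul p F, h,
    mulSingle_smul]

end StabilizerOfSubset

section WeylGroup

/-- The Weyl group `N(H) / H` of a subgroup `H`. By Galois theory it is the automorphism group of
the fixed field of `H`. -/
abbrev WeylGroup {Γ : Type*} [Group Γ] (H : Subgroup Γ) : Type _ :=
  Subgroup.normalizer (H : Set Γ) ⧸ H.subgroupOf (Subgroup.normalizer (H : Set Γ))

variable {G Γ Δ : Type*} [Group G] [Group Γ] [Group Δ]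

theorem WeylGroup.nonempty_mulEquiv_of_complement {H : Subgroup Γ} (ρ : G →* Γ)
    (normalizes : ∀ a, ρ a ∈ Subgroup.normalizer (H : Set Γ)) (trivial : ∀ a, ρ a ∈ H → a = 1)
    (spans : ∀ σ ∈ Subgroup.normalizer (H : Set Γ), ∃ h ∈ H, ∃ a, σ = h * ρ a) :
    Nonempty (WeylGroup H ≃* G) := by
  let ρN : G →* Subgroup.normalizer (H : Set Γ) := ρ.codRestrict _ normalizes
  let φ : G →* WeylGroup H := (QuotientGroup.mk' _).comp ρN
  have φ_injective : Function.Injective φ :=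
    (injective_iff_map_eq_one φ).2 fun a ha => trivial a ((QuotientGroup.eq_one_iff (ρN a)).1 ha)
  have φ_surjective : Function.Surjective φ := by
    rintro ⟨σ, hσ⟩
    obtain ⟨h, hh, a, rfl⟩ := spans σ hσ
    have hconj : (ρ a)⁻¹ * h * ρ a ∈ H :=
      (Subgroup.mem_normalizer_iff''.1 (normalizes a) h).1 hh
    rw [mul_assoc] at hconj
    exact ⟨a, QuotientGroup.eq.2 hconj⟩
  exact ⟨(MulEquiv.ofBijective φ ⟨φ_injective, φ_surjective⟩).symm⟩

theorem WeylGroup.nonempty_mulEquiv_comap {f : Γ →* Δ} (hf : Function.Surjective f)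
    (H : Subgroup Δ) : Nonempty (WeylGroup (H.comap f) ≃* WeylGroup H) := by
  have mem_normalizer (σ : Γ) : σ ∈ Subgroup.normalizer (H.comap f : Set Γ) ↔
      f σ ∈ Subgroup.normalizer (H : Set Δ) := by
    rw [← Subgroup.comap_normalizer_eq_of_surjective H hf, Subgroup.mem_comap]
  let fN : Subgroup.normalizer (H.comap f : Set Γ) →* Subgroup.normalizer (H : Set Δ) :=
    (f.comp (Subgroup.subtype _)).codRestrict _ fun σ => (mem_normalizer σ).1 σ.2
  let φ : Subgroup.normalizer (H.comap f : Set Γ) →* WeylGroup H := (QuotientGroup.mk' _).comp fN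
  have φ_surjective : Function.Surjective φ := by
    rintro ⟨σ, hσ⟩
    obtain ⟨σ, rfl⟩ := hf σ
    exact ⟨⟨σ, (mem_normalizer σ).2 hσ⟩, rfl⟩
  have ker_φ : (H.comap f).subgroupOf (Subgroup.normalizer (H.comap f : Set Γ)) = φ.ker := by
    ext σ
    exact (QuotientGroup.eq_one_iff (N := H.subgroupOf _) (fN σ)).symm
  exact ⟨QuotientGroup.liftEquiv _ φ_surjective ker_φ⟩

theorem card_compl_orbit_le_index {Ω : Type*} [Finite Ω] (H : Subgroup (Equiv.Perm Ω)) (w : Ω) :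
    Nat.card ↥(MulAction.orbit H w)ᶜ ≤ H.index := by
  classical
  let swapCoset (x : ↥(MulAction.orbit H w)ᶜ) : Equiv.Perm Ω ⧸ H :=
    (Equiv.swap (x : Ω) w : Equiv.Perm Ω)
  refine Nat.card_le_card_of_injective swapCoset fun x y hxy => ?_
  by_contra hne
  have hmem : (Equiv.swap (x : Ω) w)⁻¹ * Equiv.swap (y : Ω) w ∈ H := QuotientGroup.eq.1 hxy
  have hyw : (y : Ω) ≠ w := by
    intro h
    exact y.2 (h.symm ▸ MulAction.mem_orbit_self w)
  have hw : ((Equiv.swap (x : Ω) w)⁻¹ * Equiv.swap (y : Ω) w) w = y := by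
    rw [Equiv.swap_inv, Equiv.Perm.mul_apply, Equiv.swap_apply_right,
      Equiv.swap_apply_of_ne_of_ne (Subtype.coe_ne_coe.2 (Ne.symm hne)) hyw]
  exact y.2 ⟨⟨_, hmem⟩, hw⟩

theorem exists_smul_of_mem_normalizer {M X : Type*} [Group M] [MulAction M X] {σ : Equiv.Perm X}
    (hσ : σ ∈ Subgroup.normalizer ((MulAction.toPermHom M X).range : Set (Equiv.Perm X))) (b : M) :
    ∃ b' : M, ∀ x, σ (b' • x) = b • σ x := by
  obtain ⟨b', hb'⟩ := (Subgroup.mem_normalizer_iff''.1 hσ _).1 ⟨b, rfl⟩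
  refine ⟨b', fun x => Equiv.Perm.eq_inv_iff_eq.1 ?_⟩
  simpa using! Equiv.congr_fun hb' x

end WeylGroup

section BlockSystem

open scoped Pointwise

/-- The set on which the group `G → Perm α` acts so that `G` becomes its Weyl group. The points
`point g i` form one block for each `g`, on which `b` acts through `b g`; the configurations
`config g f` assign to each block `g * c` a set of `s c` of its points, so that for injective `s`
they see the right Cayley graph of `G`. -/
inductive BlockSystem (G α : Type*) (s : G → ℕ)
  | point (g : G) (i : α)
  | config (g : G) (f : ∀ c, Set.powersetCard α (s c))

namespace BlockSystem

instance {G α : Type*} {s : G → ℕ} [Finite G] [Finite α] : Finite (BlockSystem G α s) :=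
  Finite.of_surjective
    (Sum.elim (fun x : G × α => point x.1 x.2)
      fun x : G × (∀ c, Set.powersetCard α (s c)) => config x.1 x.2)
    fun
      | point g i => ⟨.inl (g, i), rfl⟩
      | config g f => ⟨.inr (g, f), rfl⟩

section Action

variable {G α : Type*} {s : G → ℕ} [Group G]

instance : MulAction G (BlockSystem G α s) where
  smul a
    | point g i => point (a * g) i
    | config g f => config (a * g) f
  one_smul
    | point g i => congrArg (point · i) (one_mul g)
    | config g f => congrArg (config · f) (one_mul g)
  mul_smul a a'
    | point g i => congrArg (point · i) (mul_assoc a a' g)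
    | config g f => congrArg (config · f) (mul_assoc a a' g)

theorem smul_point (a g : G) (i : α) : a • (point g i : BlockSystem G α s) = point (a * g) i := rfl

theorem smul_config (a g : G) (f : ∀ c, Set.powersetCard α (s c)) :
    a • config g f = config (a * g) f := rfl

variable [DecidableEq α]

instance : MulAction (G → Equiv.Perm α) (BlockSystem G α s) where
  smul b
    | point g i => point g (b g i)
    | config g f => config g fun c => b (g * c) • f c
  one_smul
    | point _ _ => rfl
    | config g f => congrArg (config g) (funext fun c => one_smul _ (f c))
  mul_smul b b'
    | point _ _ => rfl
    | config g f => congrArg (config g) (funext fun c => mul_smul (b (g * c)) (b' (g * c)) (f c))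

theorem perm_smul_point (b : G → Equiv.Perm α) (g : G) (i : α) :
    b • (point g i : BlockSystem G α s) = point g (b g i) := rfl

theorem perm_smul_config (b : G → Equiv.Perm α) (g : G) (f : ∀ c, Set.powersetCard α (s c)) :
    b • config g f = config g fun c => b (g * c) • f c := rfl

theorem smul_perm_smul (a : G) (b : G → Equiv.Perm α) (x : BlockSystem G α s) :
    a • b • x = (fun g => b (a⁻¹ * g)) • a • x := by
  cases x with
  | point g i => simp only [perm_smul_point, smul_point, inv_mul_cancel_left]
  | config g f => simp only [perm_smul_config, smul_config, mul_assoc, inv_mul_cancel_left]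

variable (G α s) in
/-- The permutations of the block system induced by permuting each block separately: the
subgroup whose Weyl group is `G`. -/
abbrev blockPerms : Subgroup (Equiv.Perm (BlockSystem G α s)) :=
  (MulAction.toPermHom (G → Equiv.Perm α) (BlockSystem G α s)).range

theorem range_toPermHom_le_normalizer_blockPerms :
    (MulAction.toPermHom G (BlockSystem G α s)).range ≤
      Subgroup.normalizer (blockPerms G α s : Set (Equiv.Perm (BlockSystem G α s))) := by
  refine Subgroup.le_normalizer_iff.2 ?_
  rintro _ ⟨a, rfl⟩ _ ⟨b, rfl⟩
  refine ⟨fun g => b (a⁻¹ * g), Equiv.ext fun x => ?_⟩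
  simpa using! (smul_perm_smul a b (a⁻¹ • x)).symm

theorem eq_one_of_toPerm_mem_blockPerms [Nonempty α] {a : G}
    (ha : MulAction.toPerm a ∈ blockPerms G α s) : a = 1 := by
  obtain ⟨b, hb⟩ := ha
  obtain ⟨i⟩ := ‹Nonempty α›
  have hpoint : (point 1 (b 1 i) : BlockSystem G α s) = point (a * 1) i :=
    Equiv.congr_fun hb (point 1 i)
  simpa using (point.inj hpoint).1.symm

theorem card_le_index_blockPerms [Finite G] [Finite α]
    (f : ∀ c, Set.powersetCard α (s c)) : Nat.card α ≤ (blockPerms G α s).index := by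
  have point_notMem (i : α) : (point 1 i : BlockSystem G α s) ∈
      (MulAction.orbit (blockPerms G α s) (config 1 f))ᶜ := by
    rintro ⟨⟨_, b, rfl⟩, hb⟩
    change config _ _ = point _ _ at hb
    cases hb
  refine le_trans ?_ (card_compl_orbit_le_index _ (config 1 f))
  exact Nat.card_le_card_of_injective (fun i => ⟨point 1 i, point_notMem i⟩)
    fun i j hij => (point.inj (congrArg Subtype.val hij)).2

end Action

section Normalizer

variable {G α : Type*} {s : G → ℕ} {P : Equiv.Perm G}
  {σ : Equiv.Perm (BlockSystem G α s)}

theorem exists_apply_config_eq (hP : ∀ g i, σ (point g i) = point (P g) i)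
    (g : G) (f : ∀ c, Set.powersetCard α (s c)) : ∃ g' f', σ (config g f) = config g' f' := by
  rcases hx : σ (config g f) with ⟨g', i⟩ | ⟨g', f'⟩
  · rw [← P.apply_symm_apply g', ← hP] at hx
    cases σ.injective hx
  · exact ⟨g', f', rfl⟩

variable [Group G] [DecidableEq α]

theorem apply_comp_smul
    (hσ : σ ∈ Subgroup.normalizer (blockPerms G α s : Set (Equiv.Perm _)))
    (hP : ∀ g i, σ (point g i) = point (P g) i) (u : G → Equiv.Perm α) (x : BlockSystem G α s) :
    σ ((u ∘ P) • x) = u • σ x := by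
  obtain ⟨u', hu'⟩ := exists_smul_of_mem_normalizer hσ u
  suffices u' = u ∘ P by rw [← this, hu']
  funext g
  ext i
  have hpoint := hu' (point g i)
  rw [perm_smul_point, hP, hP, perm_smul_point] at hpoint
  exact (point.inj hpoint).2

theorem comp_smul_config_eq_self_iff (u : G → Equiv.Perm α) (P : Equiv.Perm G) {g : G}
    {f : ∀ c, Set.powersetCard α (s c)} :
    (u ∘ P) • config g f = config g f ↔
      ∀ x, u x • (f (g⁻¹ * P.symm x) : Finset α) = f (g⁻¹ * P.symm x) := by
  simp only [perm_smul_config, config.injEq, true_and, funext_iff, Subtype.ext_iff,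
    Set.powersetCard.coe_smul, Function.comp_apply]
  refine ((Equiv.mulLeft g).trans P).forall_congr fun {c} => ?_
  rw [Equiv.trans_apply, Equiv.coe_mulLeft, P.symm_apply_apply, inv_mul_cancel_left]

variable [Fintype α]

theorem eq_of_apply_config_eq (s_injective : Function.Injective s)
    (two_mul_lt : ∀ c, 2 * s c < Fintype.card α)
    (hσ : σ ∈ Subgroup.normalizer (blockPerms G α s : Set (Equiv.Perm _)))
    (hP : ∀ g i, σ (point g i) = point (P g) i) {g g' : G}
    {f f' : ∀ c, Set.powersetCard α (s c)} (h : σ (config g f) = config g' f') :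
    (∀ c, P (g * c) = g' * c) ∧ f' = f := by
  let F (x : G) : Finset α := f (g⁻¹ * P.symm x)
  let F' (x : G) : Finset α := f' (g'⁻¹ * x)
  have card_lt {g : G} {f : ∀ c, Set.powersetCard α (s c)} (x : G) :
      2 * (f (g⁻¹ * x) : Finset α).card < Fintype.card α := by
    rw [Set.powersetCard.card_eq]
    exact two_mul_lt _
  have F_eq : F = F' := by
    refine eq_of_pi_smul_eq_iff (fun _ => card_lt _) (fun _ => card_lt _) fun u => ?_
    calc u • F = F ↔ (u ∘ P) • config g f = config g f := by
          rw [comp_smul_config_eq_self_iff, funext_iff]; rfl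
      _ ↔ u • config g' f' = config g' f' := by
          rw [← h, ← apply_comp_smul hσ hP, σ.injective.eq_iff]
      _ ↔ u • F' = F' := by
          rw [← Function.comp_id u, ← Equiv.coe_refl, comp_smul_config_eq_self_iff, funext_iff]; rfl
  have hf (c : G) : (f c : Finset α) = f' (g'⁻¹ * P (g * c)) := by
    calc (f c : Finset α) = F (P (g * c)) := by
          simp only [F]
          rw [P.symm_apply_apply, inv_mul_cancel_left]
      _ = F' (P (g * c)) := congrFun F_eq _
  have hc (c : G) : c = g'⁻¹ * P (g * c) := by
    refine s_injective ?_
    rw [← Set.powersetCard.card_eq (f c), hf, Set.powersetCard.card_eq]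
  refine ⟨fun c => inv_mul_eq_iff_eq_mul.1 (hc c).symm, funext fun c => Subtype.ext ?_⟩
  rw [hf, ← hc]

theorem eq_toPerm_of_apply_point_eq (s_injective : Function.Injective s)
    (two_mul_lt : ∀ c, 2 * s c < Fintype.card α)
    (hσ : σ ∈ Subgroup.normalizer (blockPerms G α s : Set (Equiv.Perm _)))
    (hP : ∀ g i, σ (point g i) = point (P g) i) : σ = MulAction.toPerm (P 1) := by
  have apply_config {g : G} {f : ∀ c, Set.powersetCard α (s c)} :
      σ (config g f) = config (P g) f ∧ ∀ c, P (g * c) = P g * c := by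
    obtain ⟨g', f', h⟩ := exists_apply_config_eq hP g f
    obtain ⟨hg', rfl⟩ := eq_of_apply_config_eq s_injective two_mul_lt hσ hP h
    obtain rfl : P g = g' := by simpa only [mul_one] using hg' 1
    exact ⟨h, hg'⟩
  have hP_one (g : G) : P g = P 1 * g := by
    simpa only [one_mul] using
      (apply_config (g := 1) (f := fun c => (nonempty_powersetCard
        (by linarith [two_mul_lt c])).some)).2 g
  ext x
  cases x with
  | point g i => rw [hP, hP_one]; rfl
  | config g f => rw [apply_config.1, hP_one]; rfl

-- If `σ` sent `point g i` to a configuration, then `σ` would send points of the block of `g` to all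
-- translates of that configuration by constant families, which are too numerous.
theorem exists_apply_point_eq (two_le : ∀ c, 2 ≤ s c) (two_mul_lt : ∀ c, 2 * s c < Fintype.card α)
    (hσ : σ ∈ Subgroup.normalizer (blockPerms G α s : Set (Equiv.Perm _))) (g : G) (i : α) :
    ∃ g' i', σ (point g i) = point g' i' := by
  rcases hx : σ (point g i) with ⟨g', i'⟩ | ⟨g', f⟩
  · exact ⟨g', i', rfl⟩
  have exists_config (A : Set.powersetCard α (s 1)) :
      ∃ j f', σ (point g j) = config g' f' ∧ f' 1 = A := by
    obtain ⟨p, rfl⟩ := Set.powersetCard.isPretransitive.exists_smul_eq (f 1) A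
    obtain ⟨b, hb⟩ := exists_smul_of_mem_normalizer hσ fun _ => p
    exact ⟨b g i, fun c => p • f c, by rw [← perm_smul_point, hb, hx, perm_smul_config], rfl⟩
  choose j f' hj hf' using exists_config
  have j_injective : Function.Injective j := fun A B hAB => by
    have hconfig : config g' (f' A) = config g' (f' B) := by rw [← hj, ← hj, hAB]
    rw [← hf' A, ← hf' B, (config.inj hconfig).2]
  have card_le := Nat.card_le_card_of_injective j j_injective
  rw [Set.powersetCard.card, Nat.card_eq_fintype_card] at card_le
  exact absurd card_le (lt_choose_of_two_mul_lt (two_le 1) (two_mul_lt 1)).not_ge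

theorem exists_perm_apply_point_eq [Finite G] (two_le : ∀ c, 2 ≤ s c)
    (two_mul_lt : ∀ c, 2 * s c < Fintype.card α)
    (hσ : σ ∈ Subgroup.normalizer (blockPerms G α s : Set (Equiv.Perm _))) :
    ∃ (P : Equiv.Perm G) (b : G → Equiv.Perm α), ∀ g i, σ (point g i) = b • point (P g) i := by
  choose P q hPq using exists_apply_point_eq two_le two_mul_lt hσ
  have P_eq (g : G) (i j : α) : P g j = P g i := by
    obtain ⟨b, hb⟩ := exists_smul_of_mem_normalizer (inv_mem hσ) fun _ => Equiv.swap i j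
    have hpoint : b • σ (point g i) = σ (point g j) := by
      rw [← Equiv.Perm.inv_eq_iff_eq, hb, Equiv.Perm.coe_inv, σ.symm_apply_apply, perm_smul_point,
        Equiv.swap_apply_left]
    rw [hPq, hPq, perm_smul_point] at hpoint
    exact (point.inj hpoint).1.symm
  have : Nonempty α := Fintype.card_pos_iff.1 ((Nat.zero_le _).trans_lt (two_mul_lt 1))
  obtain ⟨i₀⟩ := this
  have hσ_point (g : G) (i : α) : σ (point g i) = point (P g i₀) (q g i) := by
    rw [hPq, P_eq g i₀ i]
  have q_bijective (g : G) : Function.Bijective (q g) :=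
    Finite.injective_iff_bijective.1 fun i j hij =>
      (point.inj (σ.injective ((hσ_point g i).trans (hij ▸ (hσ_point g j).symm)))).2
  have P_bijective : Function.Bijective (P · i₀) := by
    refine Finite.injective_iff_bijective.1 fun g g' hg => ?_
    obtain ⟨i, hi⟩ := (q_bijective g).surjective (q g' i₀)
    refine (point.inj (σ.injective (a₁ := point g i) (a₂ := point g' i₀) ?_)).1
    rw [hσ_point, hσ_point, hi]
    exact congrArg (point · _) hg
  let e : Equiv.Perm G := Equiv.ofBijective _ P_bijective
  refine ⟨e, fun g => Equiv.ofBijective _ (q_bijective (e.symm g)), fun g i => ?_⟩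
  rw [hσ_point, perm_smul_point, e.symm_apply_apply]
  rfl

theorem exists_eq_mul_toPerm_of_mem_normalizer [Finite G] (s_injective : Function.Injective s)
    (two_le : ∀ c, 2 ≤ s c) (two_mul_lt : ∀ c, 2 * s c < Fintype.card α)
    (hσ : σ ∈ Subgroup.normalizer (blockPerms G α s : Set (Equiv.Perm _))) :
    ∃ β ∈ blockPerms G α s, ∃ a : G, σ = β * MulAction.toPermHom G _ a := by
  obtain ⟨P, b, hb⟩ := exists_perm_apply_point_eq two_le two_mul_lt hσ
  let β := MulAction.toPermHom _ (BlockSystem G α s) b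
  have hβσ : β⁻¹ * σ ∈ Subgroup.normalizer (blockPerms G α s : Set (Equiv.Perm _)) :=
    mul_mem (inv_mem (Subgroup.le_normalizer ⟨b, rfl⟩)) hσ
  have hP (g : G) (i : α) : (β⁻¹ * σ) (point g i) = point (P g) i := by
    rw [Equiv.Perm.mul_apply, hb, Equiv.Perm.inv_eq_iff_eq]
    rfl
  refine ⟨β, ⟨b, rfl⟩, P 1, ?_⟩
  rw [MulAction.toPermHom_apply,
    ← eq_toPerm_of_apply_point_eq s_injective two_mul_lt hβσ hP, mul_inv_cancel_left]

end Normalizer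

end BlockSystem

theorem nonempty_weylGroup_permCongr_mulEquiv {Ω Ω' : Type*} (e : Ω ≃ Ω')
    (H : Subgroup (Equiv.Perm Ω)) :
    ∃ H' : Subgroup (Equiv.Perm Ω'), H'.index = H.index ∧ Nonempty (WeylGroup H' ≃* WeylGroup H) :=
  ⟨H.comap e.permCongrHom.symm.toMonoidHom,
    H.index_comap_of_surjective e.permCongrHom.symm.surjective,
    WeylGroup.nonempty_mulEquiv_comap e.permCongrHom.symm.surjective H⟩

theorem exists_weylGroup_mulEquiv (G : Type*) [Group G] [Finite G] (N : ℕ) :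
    ∃ (n : ℕ) (H : Subgroup (Equiv.Perm (Fin n))),
      3 ≤ n ∧ N ≤ H.index ∧ Nonempty (WeylGroup H ≃* G) := by
  let e := Finite.equivFin G
  let s (c : G) : ℕ := e c + 2
  obtain ⟨m, hm⟩ : ∃ m, m = 2 * Nat.card G + N + 3 := ⟨_, rfl⟩
  have s_injective : Function.Injective s := fun c d h =>
    e.injective (Fin.ext (Nat.add_right_cancel h))
  have two_mul_lt (c : G) : 2 * s c < Fintype.card (Fin m) := by
    have := (e c).isLt
    simp only [Fintype.card_fin, s]
    lia
  have : Nonempty (Fin m) := ⟨⟨0, by lia⟩⟩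
  let B := BlockSystem G (Fin m) s
  have weyl : Nonempty (WeylGroup (BlockSystem.blockPerms G (Fin m) s) ≃* G) :=
    WeylGroup.nonempty_mulEquiv_of_complement (MulAction.toPermHom G B)
      (fun a => BlockSystem.range_toPermHom_le_normalizer_blockPerms ⟨a, rfl⟩)
      (fun _ => BlockSystem.eq_one_of_toPerm_mem_blockPerms)
      fun σ hσ => BlockSystem.exists_eq_mul_toPerm_of_mem_normalizer s_injective
        (fun _ => Nat.le_add_left 2 _) two_mul_lt hσ
  have nonempty_config (c : G) : Nonempty (Set.powersetCard (Fin m) (s c)) :=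
    nonempty_powersetCard (by linarith [two_mul_lt c])
  have le_index : m ≤ (BlockSystem.blockPerms G (Fin m) s).index :=
    (Nat.card_fin m).ge.trans
      (BlockSystem.card_le_index_blockPerms fun c => (nonempty_config c).some)
  have le_card : m ≤ Nat.card B := by
    simpa only [Nat.card_fin] using Nat.card_le_card_of_injective
      (BlockSystem.point (α := Fin m) (s := s) 1)
      fun i j hij => (BlockSystem.point.inj hij).2
  obtain ⟨H, index_eq, ⟨f⟩⟩ := nonempty_weylGroup_permCongr_mulEquiv (Finite.equivFin B)
    (BlockSystem.blockPerms G (Fin m) s)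
  exact ⟨Nat.card B, H, (by lia : 3 ≤ m).trans le_card,
    index_eq ▸ (by lia : N ≤ m).trans le_index, ⟨f.trans weyl.some⟩⟩

end BlockSystem

section Galois

open scoped Pointwise

variable {k F : Type*} [Field k] [Field F] [Algebra k F] [FiniteDimensional k F] [IsGalois k F]

theorem mem_normalizer_fixingSubgroup_iff (E : IntermediateField k F) (σ : Gal(F/k)) :
    σ ∈ Subgroup.normalizer (E.fixingSubgroup : Set Gal(F/k)) ↔ E.map σ.toAlgHom = E := by
  rw [Subgroup.mem_normalizer_iff_map_conj_eq]
  change MulAut.conj σ • E.fixingSubgroup = E.fixingSubgroup ↔ _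
  rw [← IsGalois.map_fixingSubgroup]
  exact IsGalois.intermediateFieldEquivSubgroup.injective.eq_iff (a := E.map σ.toAlgHom)

theorem nonempty_weylGroup_fixingSubgroup_mulEquiv (E : IntermediateField k F) :
    Nonempty (WeylGroup E.fixingSubgroup ≃* Gal(E/k)) := by
  let restrict : Subgroup.normalizer (E.fixingSubgroup : Set Gal(F/k)) →* Gal(E/k) :=
    MonoidHom.mk' (fun σ => (IntermediateField.intermediateFieldMap σ.1 E).trans
      (IntermediateField.equivOfEq ((mem_normalizer_fixingSubgroup_iff E σ).1 σ.2)))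
      fun _ _ => rfl
  have restrict_surjective : Function.Surjective restrict := by
    intro τ
    have map_eq : E.map (τ.liftNormal F).toAlgHom = E := by
      refine SetLike.ext fun y => ⟨?_, fun hy => ?_⟩
      · rintro ⟨x, hx, rfl⟩
        exact (τ.liftNormal_commutes F ⟨x, hx⟩).symm ▸ (τ ⟨x, hx⟩).2
      · refine ⟨τ.symm ⟨y, hy⟩, (τ.symm _).2, ?_⟩
        exact (τ.liftNormal_commutes F _).trans (by rw [τ.apply_symm_apply]; rfl)
    refine ⟨⟨τ.liftNormal F, (mem_normalizer_fixingSubgroup_iff E _).2 map_eq⟩, ?_⟩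
    ext x
    exact τ.liftNormal_commutes F x
  have ker_restrict : E.fixingSubgroup.subgroupOf
      (Subgroup.normalizer (E.fixingSubgroup : Set Gal(F/k))) = restrict.ker := by
    ext σ
    rw [Subgroup.mem_subgroupOf, MonoidHom.mem_ker, IntermediateField.mem_fixingSubgroup_iff,
      AlgEquiv.ext_iff]
    exact ⟨fun h x => Subtype.ext (h x x.2), fun h x hx => congrArg Subtype.val (h ⟨x, hx⟩)⟩
  exact ⟨QuotientGroup.liftEquiv _ restrict_surjective ker_restrict⟩

end Galois

section Specialization

variable {k B Ω : Type*} [Field k] [CommRing B] [Algebra k[X] B] [Field Ω] [Algebra k Ω]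

/-- `φ` is a specialization of the `k[T]`-algebra `B` at `T = t`, that is, an `Ω`-valued point of
the fibre of `Spec B` over `t`. -/
def IsSpecialization (t : k) (φ : B →+* Ω) : Prop :=
  φ.comp (algebraMap k[X] B) = (algebraMap k Ω).comp (Polynomial.evalRingHom t)

namespace IsSpecialization

variable {t : k} {φ ψ : B →+* Ω}

theorem apply_algebraMap (hφ : IsSpecialization t φ) (p : k[X]) :
    φ (algebraMap k[X] B p) = algebraMap k Ω (p.eval t) :=
  RingHom.congr_fun hφ p

theorem map_map (hφ : IsSpecialization t φ) (f : k[X][X]) :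
    (f.map (algebraMap k[X] B)).map φ =
      (f.map (Polynomial.evalRingHom t)).map (algebraMap k Ω) := by
  rw [Polynomial.map_map, Polynomial.map_map, hφ]

theorem aeval_apply (hφ : IsSpecialization t φ) (f : k[X][X]) (b : B) :
    Polynomial.aeval (φ b) (f.map (Polynomial.evalRingHom t)) = φ (Polynomial.aeval b f) := by
  rw [Polynomial.aeval_def, ← Polynomial.eval_map, ← hφ.map_map, Polynomial.eval_map_apply,
    Polynomial.eval_map_algebraMap]

theorem algEquiv_comp (hφ : IsSpecialization t φ) (τ : Gal(Ω/k)) :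
    IsSpecialization t ((τ : Ω →+* Ω).comp φ) := by
  rw [IsSpecialization, RingHom.comp_assoc, hφ, ← RingHom.comp_assoc]
  exact congrArg (RingHom.comp · _) (τ : Ω →ₐ[k] Ω).comp_algebraMap

variable (B Ω) in
theorem exists_of_isIntegral [FaithfulSMul k[X] B] [Algebra.IsIntegral k[X] B] [IsAlgClosed Ω]
    (t : k) : ∃ φ : B →+* Ω, IsSpecialization t φ := by
  let ev : k[X] →+* k := Polynomial.evalRingHom t
  have ev_surjective : Function.Surjective ev := fun a => ⟨Polynomial.C a, Polynomial.eval_C⟩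
  have : (RingHom.ker ev).IsMaximal := RingHom.ker_isMaximal_of_surjective ev ev_surjective
  obtain ⟨Q, _, comap_Q⟩ := Ideal.exists_ideal_over_maximal_of_isIntegral (S := B) (RingHom.ker ev)
    (by simp [(RingHom.injective_iff_ker_eq_bot _).1 (FaithfulSMul.algebraMap_injective k[X] B)])
  let _ : Field (B ⧸ Q) := Ideal.Quotient.field Q
  let ι : k →+* B ⧸ Q := RingHom.liftOfSurjective ev ev_surjective
    ⟨(Ideal.Quotient.mk Q).comp (algebraMap k[X] B), fun p hp =>
      Ideal.Quotient.eq_zero_iff_mem.2 (Ideal.mem_comap.1 (comap_Q.symm ▸ hp))⟩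
  have ι_comp : ι.comp ev = (Ideal.Quotient.mk Q).comp (algebraMap k[X] B) :=
    RingHom.liftOfRightInverse_comp _ _ _ _
  let _ : Algebra k (B ⧸ Q) := ι.toAlgebra
  have : Algebra.IsAlgebraic k (B ⧸ Q) := by
    refine ⟨fun y => IsIntegral.isAlgebraic ?_⟩
    obtain ⟨b, rfl⟩ := Ideal.Quotient.mk_surjective y
    exact (Algebra.IsIntegral.isIntegral (R := k[X]) b).map_of_comp_eq ev
      (Ideal.Quotient.mk Q) ι_comp
  let ψ : (B ⧸ Q) →ₐ[k] Ω := IsAlgClosed.lift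
  refine ⟨(ψ : B ⧸ Q →+* Ω).comp (Ideal.Quotient.mk Q), ?_⟩
  rw [IsSpecialization, RingHom.comp_assoc, ← ι_comp, ← RingHom.comp_assoc]
  exact congrArg (RingHom.comp · _) ψ.comp_algebraMap

section Conjugacy

variable {G : Type*} [Group G] [Finite G] [MulSemiringAction G B]
  [Algebra.IsInvariant k[X] B G]

theorem exists_apply_eq_apply_smul (hφ : IsSpecialization t φ) (hψ : IsSpecialization t ψ) (b : B) :
    ∃ g : G, ψ b = φ (g • b) := by
  have := Fintype.ofFinite G
  obtain ⟨q, hq⟩ := (Polynomial.mem_lifts _).1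
    (Algebra.IsInvariant.charpoly_mem_lifts k[X] B G b)
  have isRoot : (q.map (algebraMap k[X] B)).eval₂ φ (ψ b) = 0 := by
    rw [Polynomial.eval₂_map, hφ, ← hψ, ← Polynomial.eval₂_map, Polynomial.eval₂_hom, hq,
      MulSemiringAction.eval_charpoly, map_zero]
  rw [hq, MulSemiringAction.charpoly_eq, Polynomial.eval₂_finsetProd,
    Finset.prod_eq_zero_iff] at isRoot
  obtain ⟨g, -, hg⟩ := isRoot
  rw [Polynomial.eval₂_sub, Polynomial.eval₂_X, Polynomial.eval₂_C, sub_eq_zero] at hg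
  exact ⟨g, hg⟩

-- Each `b` only determines some `g` with `ψ b = φ (g • b)`, but `B` is not a finite union of proper
-- subspaces, so one `g` serves all `b`.
theorem exists_eq_comp_smul [Infinite k] [SMulCommClass G k[X] B] (hφ : IsSpecialization t φ)
    (hψ : IsSpecialization t ψ) : ∃ g : G, ∀ b, ψ b = φ (g • b) := by
  let _ : Algebra k B := Algebra.compHom B (Polynomial.C : k →+* k[X])
  have : SMulCommClass G k B := ⟨fun g a => smul_comm g (Polynomial.C a)⟩
  let toAlgHom {χ : B →+* Ω} (hχ : IsSpecialization t χ) : B →ₐ[k] Ω :=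
    { χ with commutes' := fun a => (hχ.apply_algebraMap _).trans (by rw [Polynomial.eval_C]) }
  let V (g : G) : Subspace k B := LinearMap.eqLocus (toAlgHom hψ).toLinearMap
    ((toAlgHom hφ).comp (MulSemiringAction.toAlgHom k B g)).toLinearMap
  obtain ⟨g, hg⟩ := Subspace.exists_eq_top_of_iUnion_eq_univ (p := V) <|
    Set.iUnion_eq_univ_iff.2 (exists_apply_eq_apply_smul hφ hψ)
  exact ⟨g, fun b => (hg ▸ Submodule.mem_top : b ∈ V g)⟩

end Conjugacy

section Domain

variable [IsDomain B]

theorem map_aroots (hφ : IsSpecialization t φ) {f : k[X][X]} (hf : f.Monic)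
    (splits : (f.map (algebraMap k[X] B)).Splits) :
    (f.aroots B).map φ = (f.map (Polynomial.evalRingHom t)).aroots Ω := by
  rw [Polynomial.aroots, Polynomial.aroots, ← hφ.map_map]
  exact (splits.roots_map_of_ne_zero ((hf.map _).map _).ne_zero).symm

theorem image_rootSet (hφ : IsSpecialization t φ) {f : k[X][X]} (hf : f.Monic)
    (splits : (f.map (algebraMap k[X] B)).Splits) :
    φ '' f.rootSet B = (f.map (Polynomial.evalRingHom t)).rootSet Ω := by
  classical
  ext y
  simp only [Polynomial.rootSet_def, ← hφ.map_aroots hf splits, Set.mem_image, Finset.mem_coe,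
    Multiset.mem_toFinset, Multiset.mem_map]

theorem nodup_map_aroots (hφ : IsSpecialization t φ) {f : k[X][X]} (hf : f.Monic)
    (splits : (f.map (algebraMap k[X] B)).Splits)
    (separable : (f.map (Polynomial.evalRingHom t)).Separable) :
    ((f.aroots B).map φ).Nodup := by
  rw [hφ.map_aroots hf splits]
  exact Polynomial.nodup_roots separable.map

theorem injOn_rootSet (hφ : IsSpecialization t φ) {f : k[X][X]} (hf : f.Monic)
    (splits : (f.map (algebraMap k[X] B)).Splits)
    (separable : (f.map (Polynomial.evalRingHom t)).Separable) : Set.InjOn φ (f.rootSet B) := by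
  classical
  intro x hx y hy hxy
  rw [Polynomial.rootSet_def, Finset.mem_coe, Multiset.mem_toFinset] at hx hy
  exact Multiset.inj_on_of_nodup_map (hφ.nodup_map_aroots hf splits separable) x hx y hy hxy

theorem separable_map (K E : Type*) [Field K] [Algebra k[X] K] [Field E]
    [Algebra K E] [Algebra k[X] E] [IsScalarTower k[X] K E] [Algebra B E] [FaithfulSMul B E]
    [IsScalarTower k[X] B E] (hφ : IsSpecialization t φ) {f : k[X][X]} (hf : f.Monic)
    (splits : (f.map (algebraMap k[X] B)).Splits)
    (separable : (f.map (Polynomial.evalRingHom t)).Separable) :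
    (f.map (algebraMap k[X] K)).Separable := by
  have splits_E : ((f.map (algebraMap k[X] K)).map (algebraMap K E)).Splits := by
    rw [Polynomial.map_map, ← IsScalarTower.algebraMap_eq, IsScalarTower.algebraMap_eq k[X] B E,
      ← Polynomial.map_map]
    exact splits.map _
  refine (Polynomial.nodup_aroots_iff_of_splits (hf.map _).ne_zero splits_E).1 ?_
  rw [Polynomial.aroots_map, ← splits.map_aroots_algebraMap]
  exact (hφ.nodup_map_aroots hf splits separable).of_map.map (FaithfulSMul.algebraMap_injective B E)

variable (Ω) in
theorem finite_setOf_exists_apply_eq_zero [Algebra.IsIntegral k[X] B] {b : B} (hb : b ≠ 0) :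
    {t : k | ∃ φ : B →+* Ω, IsSpecialization t φ ∧ φ b = 0}.Finite := by
  obtain ⟨r, r_ne_zero, c, hc⟩ := (Algebra.IsIntegral.isIntegral (R := k[X]) b).isAlgebraic
    |>.exists_nonzero_dvd (mem_nonZeroDivisors_of_ne_zero hb)
  refine (Polynomial.finite_setOfPred_isRoot r_ne_zero).subset ?_
  rintro t ⟨φ, hφ, hφb⟩
  have : algebraMap k Ω (r.eval t) = 0 := by
    rw [← hφ.apply_algebraMap, hc, map_mul, hφb, zero_mul]
  exact (map_eq_zero _).1 this

variable (Ω) in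
theorem finite_setOf_exists_not_injective_comp [Algebra.IsIntegral k[X] B] {ι : Type*} [Finite ι]
    {v : ι → B} (hv : Function.Injective v) :
    {t : k | ∃ φ : B →+* Ω, IsSpecialization t φ ∧ ¬ Function.Injective (φ ∘ v)}.Finite := by
  refine (Set.finite_iUnion fun p : {p : ι × ι // v p.1 - v p.2 ≠ 0} =>
    finite_setOf_exists_apply_eq_zero (k := k) Ω p.2).subset ?_
  rintro t ⟨φ, hφ, h⟩
  obtain ⟨i, j, hij, hne⟩ := Function.not_injective_iff.1 h
  exact Set.mem_iUnion.2 ⟨⟨(i, j), sub_ne_zero.2 (hv.ne hne)⟩, φ, hφ,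
    by rw [map_sub, sub_eq_zero]; exact hij⟩

end Domain

end IsSpecialization

end Specialization

section SpecializationTheorem

theorem exists_injective_smul (k : Type*) {V G : Type*} [Field k] [Infinite k] [AddCommGroup V]
    [Module k V] [Group G] [Finite G] [DistribMulAction G V] [SMulCommClass G k V]
    [FaithfulSMul G V] : ∃ v : V, Function.Injective fun g : G => g • v := by
  by_contra! h
  let fixed (g : {g : G // g ≠ 1}) : Subspace k V :=
    LinearMap.eqLocus (DistribSMul.toLinearMap k V g.1) LinearMap.id
  obtain ⟨⟨g, g_ne_one⟩, hg⟩ := Subspace.exists_eq_top_of_iUnion_eq_univ (p := fixed) <|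
    Set.iUnion_eq_univ_iff.2 fun v => by
      obtain ⟨a, b, hab, hne⟩ := Function.not_injective_iff.1 (h v)
      exact ⟨⟨b⁻¹ * a, fun h => hne (inv_mul_eq_one.1 h).symm⟩,
        (mul_smul _ _ _).trans (inv_smul_eq_iff.2 hab)⟩
  exact g_ne_one <| FaithfulSMul.eq_of_smul_eq_smul fun v =>
    (hg ▸ Submodule.mem_top : v ∈ fixed ⟨g, g_ne_one⟩).trans (one_smul G v).symm

theorem minpoly_map_dvd_charpoly {A B G : Type*} [CommRing A] [IsDomain A] [IsIntegrallyClosed A]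
    [CommRing B] [IsDomain B] [Algebra A B] [Module.IsTorsionFree A B] [Group G] [Fintype G]
    [MulSemiringAction G B] [Algebra.IsInvariant A B G] (b : B) :
    (minpoly A b).map (algebraMap A B) ∣ MulSemiringAction.charpoly G b := by
  obtain ⟨q, hq⟩ := (Polynomial.mem_lifts _).1 (Algebra.IsInvariant.charpoly_mem_lifts A B G b)
  have := Algebra.IsInvariant.isIntegral A B G
  have aeval_eq_zero : Polynomial.aeval b q = 0 := by
    rw [← Polynomial.eval_map_algebraMap, hq, MulSemiringAction.eval_charpoly]
  rw [← hq]
  exact Polynomial.map_dvd _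
    (minpoly.isIntegrallyClosed_dvd (Algebra.IsIntegral.isIntegral b) aeval_eq_zero)

theorem exists_algEquiv_apply_eq_of_irreducible {k Ω : Type*} [Field k] [Field Ω] [Algebra k Ω]
    [Normal k Ω] {q : k[X]} (hq : Irreducible q) {y z : Ω} (hy : Polynomial.aeval y q = 0)
    (hz : Polynomial.aeval z q = 0) : ∃ τ : Gal(Ω/k), τ y = z := by
  refine minpoly.exists_algEquiv_of_root' (Algebra.IsAlgebraic.isAlgebraic y) ?_
  rw [← minpoly.eq_of_irreducible hq hy, map_mul, hz, zero_mul]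

namespace IsSpecialization

variable {k B Ω G : Type*} [Field k] [CommRing B] [Algebra k[X] B] [Field Ω] [Algebra k Ω]
  [Group G] [MulSemiringAction G B] {t : k} {φ : B →+* Ω}

theorem minpoly_map_dvd_prod [IsDomain B] [Module.IsTorsionFree k[X] B] [Fintype G]
    [Algebra.IsInvariant k[X] B G] (hφ : IsSpecialization t φ) (b : B) :
    ((minpoly k[X] b).map (Polynomial.evalRingHom t)).map (algebraMap k Ω) ∣
      ∏ g : G, (Polynomial.X - Polynomial.C (φ (g • b))) := by
  have := Polynomial.map_dvd φ (minpoly_map_dvd_charpoly (A := k[X]) (G := G) b)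
  rw [hφ.map_map, MulSemiringAction.charpoly_eq, Polynomial.map_prod] at this
  simpa only [Polynomial.map_sub, Polynomial.map_X, Polynomial.map_C] using this

variable [SMulCommClass G k[X] B]

theorem aeval_smul_minpoly_map (hφ : IsSpecialization t φ) (b : B) (g : G) :
    Polynomial.aeval (φ (g • b)) ((minpoly k[X] b).map (Polynomial.evalRingHom t)) = 0 := by
  rw [hφ.aeval_apply, ← MulSemiringAction.toAlgHom_apply k[X] B,
    Polynomial.aeval_algHom_apply, minpoly.aeval, map_zero, map_zero]

variable [Finite G] [Algebra.IsInvariant k[X] B G]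

theorem rootSet_minpoly_map [IsDomain B] [Module.IsTorsionFree k[X] B]
    (hφ : IsSpecialization t φ) (b : B) :
    ((minpoly k[X] b).map (Polynomial.evalRingHom t)).rootSet Ω =
      Set.range fun g : G => φ (g • b) := by
  have := Fintype.ofFinite G
  have := Algebra.IsInvariant.isIntegral k[X] B G
  have monic : (minpoly k[X] b).Monic := minpoly.monic (Algebra.IsIntegral.isIntegral b)
  ext y
  rw [Polynomial.mem_rootSet_of_ne (monic.map _).ne_zero]
  refine ⟨fun hy => ?_, fun ⟨g, hg⟩ => hg ▸ hφ.aeval_smul_minpoly_map b g⟩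
  have isRoot : (∏ g : G, (Polynomial.X - Polynomial.C (φ (g • b)))).IsRoot y :=
    Polynomial.IsRoot.dvd ((Polynomial.eval_map_algebraMap _ _).trans hy)
      (hφ.minpoly_map_dvd_prod b)
  obtain ⟨g, -, hg⟩ := Finset.prod_eq_zero_iff.1 ((Polynomial.eval_prod _ _ _).symm.trans isRoot)
  exact ⟨g, (sub_eq_zero.1 (by simpa using hg)).symm⟩

variable [Infinite k]

theorem exists_monoidHom (hφ : IsSpecialization t φ) {b : B}
    (injective : Function.Injective fun g : G => φ (g • b)) :
    ∃ χ : Gal(Ω/k) →* G, ∀ τ x, τ (φ x) = φ (χ τ • x) := by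
  choose χ hχ using fun τ : Gal(Ω/k) => exists_eq_comp_smul (G := G) hφ (hφ.algEquiv_comp τ)
  refine ⟨MonoidHom.mk' χ fun σ τ => injective ?_, hχ⟩
  calc φ (χ (σ * τ) • b) = σ (τ (φ b)) := (hχ (σ * τ) b).symm
    _ = σ (φ (χ τ • b)) := congrArg σ (hχ τ b)
    _ = φ ((χ σ * χ τ) • b) := (hχ σ _).trans (by rw [mul_smul])

theorem exists_isGalois_mulEquiv [IsDomain B] [Module.IsTorsionFree k[X] B] [IsAlgClosed Ω]
    [Normal k Ω] (hφ : IsSpecialization t φ) {b : B}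
    (injective : Function.Injective fun g : G => φ (g • b))
    (irreducible : Irreducible ((minpoly k[X] b).map (Polynomial.evalRingHom t))) :
    ∃ F : IntermediateField k Ω, FiniteDimensional k F ∧ IsGalois k F ∧
      Nonempty (Gal(F/k) ≃* G) := by
  have := Fintype.ofFinite G
  let q : k[X] := (minpoly k[X] b).map (Polynomial.evalRingHom t)
  obtain ⟨χ, hχ⟩ := hφ.exists_monoidHom injective
  have χ_surjective : Function.Surjective χ := fun g => by
    obtain ⟨τ, hτ⟩ := exists_algEquiv_apply_eq_of_irreducible irreducible
      (hφ.aeval_smul_minpoly_map b (1 : G)) (hφ.aeval_smul_minpoly_map b g)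
    rw [hχ, one_smul] at hτ
    exact ⟨τ, injective hτ⟩
  have separable : q.Separable := (Polynomial.separable_map (algebraMap k Ω)).1 <|
    (Polynomial.separable_prod_X_sub_C_iff.2 injective).of_dvd (hφ.minpoly_map_dvd_prod b)
  let F := IntermediateField.adjoin k (q.rootSet Ω)
  have : q.IsSplittingField k F :=
    IntermediateField.adjoin_rootSet_isSplittingField (IsAlgClosed.splits _)
  have : IsGalois k F := IsGalois.of_separable_splitting_field separable
  have ker_eq : F.fixingSubgroup = χ.ker := by
    ext τ
    rw [IntermediateField.mem_fixingSubgroup_iff, MonoidHom.mem_ker]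
    refine (IntermediateField.forall_mem_adjoin_smul_eq_self_iff k τ).trans ?_
    simp only [q, hφ.rootSet_minpoly_map (G := G) b, Set.forall_mem_range, AlgEquiv.smul_def, hχ,
      ← mul_smul]
    refine ⟨fun h => ?_, fun h g => by rw [h, one_mul]⟩
    exact (mul_one (χ τ)).symm.trans (injective (h 1))
  exact ⟨F, Polynomial.IsSplittingField.finiteDimensional F q, ‹_›,
    ⟨(QuotientGroup.quotientKerEquivOfSurjective _
      (AlgEquiv.restrictNormalHom_surjective Ω)).symm.trans <|
        QuotientGroup.liftEquiv _ χ_surjective (F.restrictNormalHom_ker.trans ker_eq)⟩⟩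

end IsSpecialization

theorem IsHilbertian.infinite {k : Type*} [Field k] (hk : IsHilbertian k) : Infinite k :=
  Set.infinite_univ_iff.1 <| (hk Polynomial.X
    (Polynomial.map_X (algebraMap k[X] (RatFunc k)) ▸ Polynomial.irreducible_X)).mono
      (Set.subset_univ _)

theorem IsHilbertian.infinite_setOf_irreducible {k : Type*} [Field k] (hk : IsHilbertian k)
    {f : k[X][X]} (monic : f.Monic) (irreducible : Irreducible f) :
    {t : k | Irreducible (f.map (Polynomial.evalRingHom t))}.Infinite :=
  hk f (monic.irreducible_iff_irreducible_map_fraction_map.1 irreducible)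

theorem IsHilbertian.exists_isGalois_mulEquiv {k : Type*} [Field k] (hk : IsHilbertian k)
    (Ω : Type*) [Field Ω] [Algebra k Ω] [IsAlgClosed Ω] [Normal k Ω] (B G : Type*) [CommRing B]
    [IsDomain B] [Algebra k[X] B] [Module.IsTorsionFree k[X] B] [Group G] [Finite G]
    [MulSemiringAction G B] [FaithfulSMul G B] [SMulCommClass G k[X] B]
    [Algebra.IsInvariant k[X] B G] :
    ∃ F : IntermediateField k Ω, FiniteDimensional k F ∧ IsGalois k F ∧
      Nonempty (Gal(F/k) ≃* G) := by
  have := hk.infinite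
  have := Algebra.IsInvariant.isIntegral k[X] B G
  let _ : Algebra k B := Algebra.compHom B (Polynomial.C : k →+* k[X])
  have : SMulCommClass G k B := ⟨fun g a => smul_comm g (Polynomial.C a)⟩
  obtain ⟨b, hb⟩ := exists_injective_smul k (V := B) (G := G)
  have integral : IsIntegral k[X] b := Algebra.IsIntegral.isIntegral b
  obtain ⟨t, irreducible, ht⟩ := ((hk.infinite_setOf_irreducible (minpoly.monic integral)
    (minpoly.irreducible integral)).sdiff
      (IsSpecialization.finite_setOf_exists_not_injective_comp Ω hb)).nonempty
  obtain ⟨φ, hφ⟩ := IsSpecialization.exists_of_isIntegral B Ω t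
  exact hφ.exists_isGalois_mulEquiv (not_not.1 fun h => ht ⟨φ, hφ, h⟩) irreducible

end SpecializationTheorem

section SymmetricGroupCriterion

variable {G α : Type*} [Group G] [MulAction G α]

theorem isMultiplyPretransitive_two_of_stabilizer [MulAction.IsPretransitive G α] (a : α)
    (h : ∀ x y, x ≠ a → y ≠ a → ∃ g : G, g • a = a ∧ g • x = y) :
    MulAction.IsMultiplyPretransitive G α 2 := by
  rw [MulAction.is_two_pretransitive_iff]
  intro x x' y y' hx hy
  obtain ⟨p, rfl⟩ := MulAction.exists_smul_eq G a x
  obtain ⟨q, rfl⟩ := MulAction.exists_smul_eq G a y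
  obtain ⟨r, hr, hrx⟩ := h (p⁻¹ • x') (q⁻¹ • y') (fun h => hx (inv_smul_eq_iff.1 h).symm)
    (fun h => hy (inv_smul_eq_iff.1 h).symm)
  refine ⟨q * r * p⁻¹, ?_, ?_⟩
  · rw [mul_smul, inv_smul_smul, mul_smul, hr]
  · rw [mul_smul, mul_smul, hrx, smul_inv_smul]

/-- The pointwise stabilizer of `Sᶜ` acts transitively on `S`. Specializations make Galois groups
satisfy this on sets of roots of prescribed size. -/
def IsTransitiveOn (G : Type*) [Group G] [MulAction G α] (S : Set α) : Prop :=
  ∀ x ∈ S, ∀ y ∈ S, ∃ g : G, g • x = y ∧ ∀ z ∉ S, g • z = z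

theorem isSwap_of_forall_notMem_pair_eq [Finite α] [DecidableEq α] {σ : Equiv.Perm α} {x y : α}
    (hσ : σ ≠ 1) (fixed : ∀ z ∉ ({x, y} : Set α), σ z = z) : σ.IsSwap := by
  have := Fintype.ofFinite α
  have support_subset : σ.support ⊆ {x, y} := fun z hz => by
    by_contra h
    exact Equiv.Perm.mem_support.1 hz (fixed z (by simpa using h))
  have := (Finset.card_le_card support_subset).trans Finset.card_le_two
  have := Equiv.Perm.card_support_le_one.not.2 hσ
  exact Equiv.Perm.card_support_eq_two.1 (by lia)

theorem toPermHom_surjective_of_isTransitiveOn [Finite α] (three_le : 3 ≤ Nat.card α)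
    (h : ∀ d, 2 ≤ d → d ≤ Nat.card α → ∃ S : Set α, S.ncard = d ∧ IsTransitiveOn G S) :
    Function.Surjective (MulAction.toPermHom G α) := by
  classical
  have pretransitive : MulAction.IsPretransitive G α := by
    obtain ⟨S, card_S, hS⟩ := h (Nat.card α) (by lia) le_rfl
    obtain rfl := (Set.eq_univ_iff_ncard S).2 card_S
    exact ⟨fun x y => (hS x (Set.mem_univ x) y (Set.mem_univ y)).imp fun _ => And.left⟩
  have two_pretransitive : MulAction.IsMultiplyPretransitive G α 2 := by
    obtain ⟨S, card_S, hS⟩ := h (Nat.card α - 1) (by lia) (by lia)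
    obtain ⟨a, ha⟩ := Set.ncard_eq_one.1
      (by rw [Set.ncard_compl, card_S]; lia : Sᶜ.ncard = 1)
    obtain rfl := compl_eq_comm.1 ha
    refine isMultiplyPretransitive_two_of_stabilizer a fun x y hx hy => ?_
    obtain ⟨g, hg, fixed⟩ := hS x hx y hy
    exact ⟨g, fixed a (fun h => h rfl), hg⟩
  obtain ⟨S, card_S, hS⟩ := h 2 le_rfl (by lia)
  obtain ⟨x, y, hxy, rfl⟩ := Set.ncard_eq_two.1 card_S
  obtain ⟨g, hg, fixed⟩ := hS x (by simp) y (by simp)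
  have isSwap : (MulAction.toPermHom G α g).IsSwap := isSwap_of_forall_notMem_pair_eq
    (fun h => hxy (hg ▸ (Equiv.congr_fun h x).symm)) fixed
  have : MulAction.IsPreprimitive G α :=
    MulAction.isPreprimitive_of_is_two_pretransitive two_pretransitive
  have : MulAction.IsPreprimitive (MulAction.toPermHom G α).range α :=
    MulAction.IsPreprimitive.of_surjective (M := G) (α := α)
      (f := ⟨id, fun _ _ => rfl⟩)
      (φ := (MulAction.toPermHom G α).rangeRestrict) Function.surjective_id
  exact MonoidHom.range_eq_top.1 <|
    Equiv.Perm.subgroup_eq_top_of_isPreprimitive_of_isSwap_mem this _ isSwap ⟨g, rfl⟩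

end SymmetricGroupCriterion

section GenericPolynomial

theorem natDegree_X_pow_add {R : Type*} [Semiring R] [Nontrivial R] {n : ℕ} {r : R[X]}
    (hr : r.degree < (n : WithBot ℕ)) : (Polynomial.X ^ n + r).natDegree = n := by
  refine Polynomial.natDegree_eq_of_degree_eq_some ?_
  rw [Polynomial.degree_add_eq_left_of_degree_lt (by rwa [Polynomial.degree_X_pow]),
    Polynomial.degree_X_pow]

theorem exists_monic_forall_map_evalRingHom_eq {k ι : Type*} [Field k] [Finite ι] {v : ι → k}
    (hv : Function.Injective v) {n : ℕ} {h : ι → k[X]} (monic : ∀ i, (h i).Monic)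
    (natDegree_eq : ∀ i, (h i).natDegree = n) :
    ∃ f : k[X][X], f.Monic ∧ f.natDegree = n ∧
      ∀ i, f.map (Polynomial.evalRingHom (v i)) = h i := by
  classical
  have := Fintype.ofFinite ι
  let r : k[X][X] := ∑ i, Lagrange.basis Finset.univ v i •
    (h i - Polynomial.X ^ n).map Polynomial.C
  have degree_sub_lt (i : ι) : (h i - Polynomial.X ^ n).degree < (n : WithBot ℕ) := by
    have degree_eq : (h i).degree = (n : WithBot ℕ) :=
      (Polynomial.degree_eq_iff_natDegree_eq (monic i).ne_zero).2 (natDegree_eq i)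
    refine (Polynomial.degree_sub_lt_left ?_ ?_ ?_).trans_eq degree_eq
    · rw [degree_eq, Polynomial.degree_X_pow]
    · exact (monic i).ne_zero
    · rw [(monic i).leadingCoeff, Polynomial.leadingCoeff_X_pow]
  have degree_lt : r.degree < (n : WithBot ℕ) := by
    refine Polynomial.mem_degreeLT.1 (Submodule.sum_mem _ fun i _ => Polynomial.mem_degreeLT.2 ?_)
    refine (Polynomial.degree_smul_le _ _).trans_lt ?_
    exact Polynomial.degree_map_le.trans_lt (degree_sub_lt i)
  refine ⟨Polynomial.X ^ n + r, Polynomial.monic_X_pow_add degree_lt,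
    natDegree_X_pow_add degree_lt, fun j => ?_⟩
  have eval_basis (i : ι) :
      (Lagrange.basis Finset.univ v i).eval (v j) = if i = j then 1 else 0 := by
    split_ifs with hij
    · exact hij ▸ Lagrange.eval_basis_self hv.injOn (Finset.mem_univ i)
    · exact Lagrange.eval_basis_of_ne hij (Finset.mem_univ j)
  have evalRingHom_comp_C : (Polynomial.evalRingHom (v j)).comp Polynomial.C = RingHom.id k :=
    RingHom.ext fun _ => Polynomial.eval_C
  simp only [r, Polynomial.map_add, Polynomial.map_pow, Polynomial.map_X, Polynomial.map_sum,
    Polynomial.smul_eq_C_mul, Polynomial.map_mul, Polynomial.map_C, Polynomial.coe_evalRingHom,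
    eval_basis, Polynomial.map_map, evalRingHom_comp_C, Polynomial.map_id,
    apply_ite Polynomial.C, map_one, map_zero, ite_mul, one_mul, zero_mul, Finset.sum_ite_eq',
    Finset.mem_univ, if_true]
  exact add_sub_cancel _ _

theorem exists_irreducible_separable {k : Type*} [Field k] (hk : IsHilbertian k) {d : ℕ}
    (hd : 2 ≤ d) : ∃ q : k[X], q.Monic ∧ q.natDegree = d ∧ Irreducible q ∧ q.Separable := by
  let r : k[X][X] := Polynomial.C Polynomial.X * Polynomial.X + Polynomial.C Polynomial.X
  have degree_r : r.degree < (d : WithBot ℕ) :=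
    Polynomial.degree_linear_le.trans_lt (by exact_mod_cast hd)
  -- `X ^ d + T X + T` is Eisenstein at `T`; its linear term keeps the derivative of the
  -- specializations nonzero in every characteristic.
  let f : k[X][X] := Polynomial.X ^ d + r
  have monic : f.Monic := Polynomial.monic_X_pow_add degree_r
  have natDegree_f : f.natDegree = d := natDegree_X_pow_add degree_r
  have isPrime : (Ideal.span {(Polynomial.X : k[X])}).IsPrime :=
    (Ideal.span_singleton_prime Polynomial.X_ne_zero).2 Polynomial.prime_X
  have coeff_zero : f.coeff 0 = Polynomial.X := by
    simp [f, r, (by lia : 0 ≠ d)]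
  have isEisenstein : f.IsEisensteinAt (Ideal.span {Polynomial.X}) := by
    refine monic.isEisensteinAt_of_mem_of_notMem isPrime.ne_top ?_ ?_
    · intro i hi
      rw [natDegree_f] at hi
      simp only [f, r, Polynomial.coeff_add, Polynomial.coeff_X_pow, hi.ne, if_false, zero_add,
        Polynomial.coeff_C_mul, Polynomial.coeff_C]
      refine Ideal.mem_span_singleton.2 (dvd_add (Dvd.intro _ rfl) ?_)
      split_ifs <;> simp
    · rw [coeff_zero, Ideal.span_singleton_pow, Ideal.mem_span_singleton]
      exact fun h => one_ne_zero <|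
        Polynomial.coeff_X_one.symm.trans (Polynomial.X_pow_dvd_iff.1 h 1 one_lt_two)
  have irreducible : Irreducible f :=
    isEisenstein.irreducible isPrime monic.isPrimitive (by lia)
  obtain ⟨t, ht, t_ne_zero⟩ := ((hk.infinite_setOf_irreducible monic irreducible).sdiff
    (Set.finite_singleton 0)).nonempty
  refine ⟨_, monic.map _, (monic.natDegree_map _).trans natDegree_f, ht, ?_⟩
  refine (Polynomial.separable_iff_derivative_ne_zero ht).2 fun h => t_ne_zero ?_
  simpa [f, r, Polynomial.coeff_derivative, Polynomial.coeff_X_pow, (by lia : 1 ≠ d)] using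
    congrArg (Polynomial.coeff · 0) h

/-- `p` is separable, with an irreducible factor of degree `d` and all other factors linear: its
Galois group permutes the roots of one factor transitively and fixes the other roots. -/
def IsIrreducibleMulSplit {k : Type*} [Field k] (d : ℕ) (p : k[X]) : Prop :=
  p.Separable ∧ ∃ (q : k[X]) (C : Finset k), Irreducible q ∧ q.natDegree = d ∧
    p = q * ∏ c ∈ C, (Polynomial.X - Polynomial.C c)

theorem separable_mul_prod_X_sub_C {k : Type*} [Field k] {q : k[X]} (irreducible : Irreducible q)
    (separable : q.Separable) (two_le : 2 ≤ q.natDegree) (C : Finset k) :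
    (q * ∏ c ∈ C, (Polynomial.X - Polynomial.C c)).Separable := by
  refine separable.mul (Polynomial.separable_prod_X_sub_C_iff'.2 fun x _ y _ h => h) ?_
  rw [irreducible.coprime_iff_not_dvd, irreducible.prime.dvd_finsetProd_iff]
  rintro ⟨c, -, hc⟩
  have := Polynomial.natDegree_le_of_dvd hc (Polynomial.X_sub_C_ne_zero c)
  rw [Polynomial.natDegree_X_sub_C] at this
  lia

theorem exists_monic_isIrreducibleMulSplit {k : Type*} [Field k] (hk : IsHilbertian k) {d n : ℕ}
    (two_le : 2 ≤ d) (hdn : d ≤ n) :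
    ∃ p : k[X], p.Monic ∧ p.natDegree = n ∧ IsIrreducibleMulSplit d p := by
  have := hk.infinite
  obtain ⟨q, monic, rfl, irreducible, separable⟩ := exists_irreducible_separable hk two_le
  obtain ⟨C, card_C⟩ := Infinite.exists_subset_card_eq k (n - q.natDegree)
  have monic_prod : (∏ c ∈ C, (Polynomial.X - Polynomial.C c)).Monic :=
    Polynomial.monic_prod_X_sub_C id C
  refine ⟨q * ∏ c ∈ C, (Polynomial.X - Polynomial.C c), monic.mul monic_prod, ?_,
    separable_mul_prod_X_sub_C irreducible separable two_le C, q, C, irreducible, rfl, rfl⟩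
  rw [monic.natDegree_mul monic_prod, Polynomial.natDegree_finsetProd_X_sub_C_eq_card, card_C]
  lia

theorem exists_monic_forall_exists_isIrreducibleMulSplit {k : Type*} [Field k] (hk : IsHilbertian k)
    (n : ℕ) : ∃ f : k[X][X], f.Monic ∧ f.natDegree = n ∧ ∀ d, 2 ≤ d → d ≤ n →
      ∃ t, IsIrreducibleMulSplit d (f.map (Polynomial.evalRingHom t)) := by
  have := hk.infinite
  choose p monic natDegree_eq hp using fun d : Finset.Icc 2 n =>
    exists_monic_isIrreducibleMulSplit hk (Finset.mem_Icc.1 d.2).1 (Finset.mem_Icc.1 d.2).2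
  let v : Finset.Icc 2 n → k := fun d => Infinite.natEmbedding k d
  obtain ⟨f, monic_f, natDegree_f, hf⟩ :=
    exists_monic_forall_map_evalRingHom_eq (v := v)
      ((Infinite.natEmbedding k).injective.comp Subtype.val_injective) monic natDegree_eq
  exact ⟨f, monic_f, natDegree_f, fun d two_le hdn =>
    ⟨v ⟨d, Finset.mem_Icc.2 ⟨two_le, hdn⟩⟩, (hf _).symm ▸ hp _⟩⟩

end GenericPolynomial

section SpecializedGaloisAction

namespace IsSpecialization

variable {k B Ω : Type*} [Field k] [CommRing B] [IsDomain B] [Algebra k[X] B] [Field Ω]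
  [Algebra k Ω] {t : k} {φ : B →+* Ω} {f : k[X][X]}

theorem injective_comp_coe_rootSet (hφ : IsSpecialization t φ) (monic : f.Monic)
    (splits : (f.map (algebraMap k[X] B)).Splits)
    (separable : (f.map (Polynomial.evalRingHom t)).Separable) :
    Function.Injective fun x : f.rootSet B => φ x :=
  Set.injOn_iff_injective.1 (hφ.injOn_rootSet monic splits separable)

theorem ncard_preimage_rootSet [IsAlgClosed Ω] (hφ : IsSpecialization t φ) (monic : f.Monic)
    (splits : (f.map (algebraMap k[X] B)).Splits)
    (separable : (f.map (Polynomial.evalRingHom t)).Separable) {q : k[X]}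
    (hq : q ∣ f.map (Polynomial.evalRingHom t)) :
    ((fun x : f.rootSet B => φ x) ⁻¹' q.rootSet Ω).ncard = q.natDegree := by
  have subset_range : q.rootSet Ω ⊆ Set.range fun x : f.rootSet B => φ x := by
    intro y hy
    have : y ∈ φ '' f.rootSet B := by
      rw [hφ.image_rootSet monic splits]
      exact (Polynomial.mem_rootSet_of_ne separable.ne_zero).2 <|
        Polynomial.aeval_eq_zero_of_dvd_aeval_eq_zero hq
          (Polynomial.aeval_eq_zero_of_mem_rootSet hy)
    simpa using this
  rw [Set.ncard_preimage_of_injective_subset_range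
    (hφ.injective_comp_coe_rootSet monic splits separable) subset_range,
    ← Nat.card_coe_set_eq, Nat.card_eq_fintype_card]
  exact Polynomial.card_rootSet_eq_natDegree (separable.of_dvd hq) (IsAlgClosed.splits _)

theorem natCard_rootSet [IsAlgClosed Ω] (hφ : IsSpecialization t φ) (monic : f.Monic)
    (splits : (f.map (algebraMap k[X] B)).Splits)
    (separable : (f.map (Polynomial.evalRingHom t)).Separable) :
    Nat.card (f.rootSet B) = f.natDegree := by
  have := hφ.ncard_preimage_rootSet monic splits separable dvd_rfl
  rw [← hφ.image_rootSet monic splits, monic.natDegree_map] at this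
  rw [← this, ← Set.ncard_univ]
  exact congrArg Set.ncard (Set.eq_univ_of_forall fun x => Set.mem_image_of_mem φ x.2).symm

theorem exists_ncard_eq_isTransitiveOn (G : Type*) [Group G] [Finite G] [MulSemiringAction G B]
    [Algebra.IsInvariant k[X] B G] [SMulCommClass G k[X] B] [Infinite k] [IsAlgClosed Ω]
    [Normal k Ω] (hφ : IsSpecialization t φ) (monic : f.Monic)
    (splits : (f.map (algebraMap k[X] B)).Splits) {d : ℕ}
    (h : IsIrreducibleMulSplit d (f.map (Polynomial.evalRingHom t))) :
    ∃ S : Set (f.rootSet B), S.ncard = d ∧ IsTransitiveOn G S := by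
  obtain ⟨separable, q, C, hq, natDegree_q, eq_mul⟩ := h
  have injective := hφ.injective_comp_coe_rootSet monic splits separable
  refine ⟨(fun x : f.rootSet B => φ x) ⁻¹' q.rootSet Ω,
    (hφ.ncard_preimage_rootSet monic splits separable (Dvd.intro _ eq_mul.symm)).trans natDegree_q,
    fun x hx y hy => ?_⟩
  obtain ⟨τ, hτ⟩ := exists_algEquiv_apply_eq_of_irreducible hq
    (Polynomial.aeval_eq_zero_of_mem_rootSet hx) (Polynomial.aeval_eq_zero_of_mem_rootSet hy)
  obtain ⟨g, hg⟩ := exists_eq_comp_smul (G := G) hφ (hφ.algEquiv_comp τ)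
  refine ⟨g, injective ((hg x).symm.trans hτ), fun z hz => injective ((hg z).symm.trans ?_)⟩
  have isRoot : Polynomial.aeval (φ z) (f.map (Polynomial.evalRingHom t)) = 0 := by
    rw [hφ.aeval_apply, Polynomial.aeval_eq_zero_of_mem_rootSet z.2, map_zero]
  rw [eq_mul, map_mul, map_prod, mul_eq_zero, Finset.prod_eq_zero_iff] at isRoot
  obtain ⟨c, -, hc⟩ := isRoot.resolve_left fun h =>
    hz ((Polynomial.mem_rootSet_of_ne hq.ne_zero).2 h)
  rw [map_sub, Polynomial.aeval_X, Polynomial.aeval_C, sub_eq_zero] at hc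
  change τ (φ z) = φ z
  rw [hc, τ.commutes]

end IsSpecialization

theorem toPermHom_rootSet_surjective {k B : Type*} (G : Type*) [Field k] [Infinite k] [CommRing B]
    [IsDomain B] [Algebra k[X] B] [FaithfulSMul k[X] B] [Group G] [Finite G]
    [MulSemiringAction G B] [SMulCommClass G k[X] B] [Algebra.IsInvariant k[X] B G] {f : k[X][X]}
    (monic : f.Monic) (splits : (f.map (algebraMap k[X] B)).Splits) (three_le : 3 ≤ f.natDegree)
    (h : ∀ d, 2 ≤ d → d ≤ f.natDegree →
      ∃ t, IsIrreducibleMulSplit d (f.map (Polynomial.evalRingHom t))) :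
    Function.Surjective (MulAction.toPermHom G (f.rootSet B)) := by
  have := Algebra.IsInvariant.isIntegral k[X] B G
  have exists_isSpecialization :=
    IsSpecialization.exists_of_isIntegral (k := k) B (AlgebraicClosure k)
  have card_eq : Nat.card (f.rootSet B) = f.natDegree := by
    obtain ⟨t, separable, -⟩ := h f.natDegree (by lia) le_rfl
    obtain ⟨φ, hφ⟩ := exists_isSpecialization t
    exact hφ.natCard_rootSet monic splits separable
  refine toPermHom_surjective_of_isTransitiveOn (card_eq ▸ three_le) fun d two_le le_card => ?_
  obtain ⟨t, ht⟩ := h d two_le (card_eq ▸ le_card)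
  obtain ⟨φ, hφ⟩ := exists_isSpecialization t
  exact hφ.exists_ncard_eq_isTransitiveOn G monic splits ht

end SpecializedGaloisAction

section IntegralClosure

variable {A E : Type*} [CommRing A] [Field E] [Algebra A E]

theorem splits_map_integralClosure {f : A[X]} (monic : f.Monic)
    (splits : (f.map (algebraMap A E)).Splits) :
    (f.map (algebraMap A (integralClosure A E))).Splits := by
  have map_map : (f.map (algebraMap A (integralClosure A E))).map (algebraMap _ E) =
      f.map (algebraMap A E) := by
    rw [Polynomial.map_map, ← IsScalarTower.algebraMap_eq]
  refine Polynomial.Splits.of_splits_map_of_injective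
    (FaithfulSMul.algebraMap_injective (integralClosure A E) E) (map_map ▸ splits) fun x hx => ?_
  rw [map_map] at hx
  exact ⟨⟨x, f, monic, (Polynomial.eval_map _ _).symm.trans (Polynomial.isRoot_of_mem_roots hx)⟩,
    rfl⟩

theorem toPermHom_rootSet_injective (K : Type*) [Field K] [Algebra A K] [IsFractionRing A K]
    [Algebra K E] [IsScalarTower A K E] {f : A[X]} (monic : f.Monic)
    [(f.map (algebraMap A K)).IsSplittingField K E] :
    Function.Injective (MulAction.toPermHom (integralClosure A E ≃ₐ[A] integralClosure A E)
      (f.rootSet (integralClosure A E))) := by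
  have : FiniteDimensional K E :=
    Polynomial.IsSplittingField.finiteDimensional E (f.map (algebraMap A K))
  refine (injective_iff_map_eq_one _).2 fun g hg => ?_
  obtain ⟨σ, rfl⟩ := (galRestrict A K E (integralClosure A E)).surjective g
  suffices σ = 1 by rw [this, map_one]
  refine AlgEquiv.coe_toAlgHom_injective <| AlgHom.ext_of_adjoin_eq_top
    (Polynomial.IsSplittingField.adjoin_rootSet E (f.map (algebraMap A K))) fun x hx => ?_
  have splits : (f.map (algebraMap A E)).Splits := by
    rw [IsScalarTower.algebraMap_eq A K E, ← Polynomial.map_map]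
    exact Polynomial.IsSplittingField.splits E _
  rw [Polynomial.rootSet, Polynomial.aroots_map, ← Polynomial.rootSet,
    ← (splits_map_integralClosure monic splits).image_rootSet_algebraMap] at hx
  obtain ⟨y, hy, rfl⟩ := hx
  have := congrArg Subtype.val (Equiv.congr_fun hg ⟨y, hy⟩)
  exact (algebraMap_galRestrict_apply A σ y).symm.trans (congrArg (algebraMap _ E) this)

end IntegralClosure

section SymmetricGroupRealization

theorem IsHilbertian.exists_isGalois_perm_mulEquiv {k : Type*} [Field k] (hk : IsHilbertian k)
    (Ω : Type*) [Field Ω] [Algebra k Ω] [IsAlgClosed Ω] [Normal k Ω] {n : ℕ} (three_le : 3 ≤ n) :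
    ∃ F : IntermediateField k Ω, FiniteDimensional k F ∧ IsGalois k F ∧
      Nonempty (Gal(F/k) ≃* Equiv.Perm (Fin n)) := by
  have := hk.infinite
  obtain ⟨f, monic, rfl, hf⟩ := exists_monic_forall_exists_isIrreducibleMulSplit hk n
  let K := RatFunc k
  let E := (f.map (algebraMap k[X] K)).SplittingField
  let B := integralClosure k[X] E
  let G := B ≃ₐ[k[X]] B
  have : FaithfulSMul k[X] E := FaithfulSMul.trans k[X] K E
  have splits : (f.map (algebraMap k[X] B)).Splits := splits_map_integralClosure monic <| by
    rw [IsScalarTower.algebraMap_eq k[X] K E, ← Polynomial.map_map]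
    exact Polynomial.SplittingField.splits _
  obtain ⟨t, separable, -⟩ := hf f.natDegree (by lia) le_rfl
  obtain ⟨φ, hφ⟩ := IsSpecialization.exists_of_isIntegral B Ω t
  have : IsGalois K E :=
    IsGalois.of_separable_splitting_field (hφ.separable_map K E monic splits separable)
  have : Finite G := Finite.of_equiv _ (galRestrict k[X] K E B).toEquiv
  have : IsFractionRing B E := IsIntegralClosure.isFractionRing_of_finite_extension k[X] K E B
  have : Algebra.IsInvariant k[X] B G := Algebra.isInvariant_of_isGalois' k[X] K E B
  let permEquiv : G ≃* Equiv.Perm (f.rootSet B) := MulEquiv.ofBijective (MulAction.toPermHom G _)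
    ⟨toPermHom_rootSet_injective K monic, toPermHom_rootSet_surjective G monic splits three_le hf⟩
  let rootEquiv : f.rootSet B ≃ Fin f.natDegree :=
    Finite.equivFinOfCardEq (hφ.natCard_rootSet monic splits separable)
  obtain ⟨F, finiteDimensional, isGalois, ⟨e⟩⟩ := hk.exists_isGalois_mulEquiv Ω B G
  exact ⟨F, finiteDimensional, isGalois, ⟨(e.trans permEquiv).trans rootEquiv.permCongrHom⟩⟩

end SymmetricGroupRealization

section IntermediateFields

theorem exists_finrank_eq_index {k Ω : Type*} [Field k] [Field Ω] [Algebra k Ω]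
    (F : IntermediateField k Ω) [FiniteDimensional k F] [IsGalois k F] (H : Subgroup Gal(F/k)) :
    ∃ L : IntermediateField k Ω, FiniteDimensional k L ∧ Module.finrank k L = H.index ∧
      Nonempty (Gal(L/k) ≃* WeylGroup H) := by
  let L := IntermediateField.fixedField H
  let e : IntermediateField.lift L ≃ₐ[k] L := (IntermediateField.liftAlgEquiv L).symm
  obtain ⟨e'⟩ := nonempty_weylGroup_fixingSubgroup_mulEquiv L
  rw [IntermediateField.fixingSubgroup_fixedField] at e'
  refine ⟨IntermediateField.lift L, .of_injective e.toLinearMap e.injective, ?_,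
    ⟨e.autCongr.trans e'.symm⟩⟩
  rw [e.toLinearEquiv.finrank_eq, IntermediateField.finrank_eq_fixingSubgroup_index,
    IntermediateField.fixingSubgroup_fixedField]

end IntermediateFields

/-- Main theorem: over a Hilbertian field `k`, every finite group occurs as the
automorphism group of infinitely many distinct finite extensions of `k`. -/
theorem aut_group_over_hilbertian (k : Type*) [Field k] (hk : IsHilbertian k)
    (G : Type*) [Group G] [Finite G] :
    {L : IntermediateField k (AlgebraicClosure k) |
      FiniteDimensional k L ∧ Nonempty ((L ≃ₐ[k] L) ≃* G)}.Infinite := by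
  refine Set.Infinite.of_image
    (fun L : IntermediateField k (AlgebraicClosure k) => Module.finrank k L)
    (Set.infinite_of_not_bddAbove ?_)
  rintro ⟨N, hN⟩
  obtain ⟨n, H, three_le, index_le, ⟨eG⟩⟩ := exists_weylGroup_mulEquiv G (N + 1)
  obtain ⟨F, _, _, ⟨e⟩⟩ := hk.exists_isGalois_perm_mulEquiv (AlgebraicClosure k) three_le
  obtain ⟨eH⟩ := WeylGroup.nonempty_mulEquiv_comap (f := e.toMonoidHom) e.surjective H
  obtain ⟨L, finiteDimensional, finrank_eq, ⟨eL⟩⟩ :=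
    exists_finrank_eq_index F (H.comap e.toMonoidHom)
  have := hN ⟨L, ⟨finiteDimensional, ⟨eL.trans (eH.trans eG)⟩⟩, finrank_eq⟩
  rw [H.index_comap_of_surjective e.surjective] at this
  lia
end

section
/- Let K ⊆ L be fields with L/K finite Galois, T an indeterminate, y ∈ K with K = k(y) for some subfield k, and x a root of X^3 + (T−y)X + (T−y) in an algebraic closure of L(T). Set E = L(T, x). Then every automorphism of E fixing K(T) pointwise fixes x, and Aut(E/K(T)) ≅ Gal(L/K). -/
open Polynomial IntermediateField

set_option synthInstance.maxHeartbeats 1000000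
set_option maxHeartbeats 1000000

/-!
The equation of `x` is linear in `T`, so `T = y - x ^ 3 / (x + 1)` and `E = L(x)` is purely
transcendental over `L`. Over `L(x)` the cubic has no root other than `x`: for another root `z`
the quotient `v = x / z` would satisfy `v ^ 2 + (x + 1) v + (x + 1) = 0`, which is Eisenstein at the
prime `x + 1` of `L[x]`. Hence fixing `K(T)`, fixing `T` and fixing `x` are the same condition on a
`K`-automorphism of `E`. Such an automorphism preserves `L`, the algebraic closure of `K` in
`L(x)`, and acts through the coefficients.
-/

section Cubic

theorem sq_add_mul_add_ne_zero {R F : Type*} [CommRing R] [IsDomain R] [IsIntegrallyClosed R]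
    [Field F] [Algebra R F] [IsFractionRing R F] {p : R} (hp : Prime p) (v : F) :
    v ^ 2 + algebraMap R F p * v + algebraMap R F p ≠ 0 := by
  intro hv
  have hint : IsIntegral R v :=
    ⟨X ^ 2 + C p * X + C p, by monicity!, by simpa using hv⟩
  obtain ⟨r, rfl⟩ := IsIntegrallyClosed.algebraMap_eq_of_integral hint
  have hr : r ^ 2 + p * r + p = 0 :=
    IsFractionRing.injective R F (by simpa using hv)
  obtain ⟨c, rfl⟩ : p ∣ r := hp.dvd_of_dvd_pow (n := 2) ⟨-(r + 1), by linear_combination hr⟩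
  refine hp.not_isUnit (.of_mul_eq_one (-(c ^ 2 + c)) (mul_left_cancel₀ hp.ne_zero ?_))
  linear_combination -hr

variable {F : Type*} [Field F] {s x z : F}

theorem add_one_ne_zero_of_cubic (hx : x ^ 3 + s * x + s = 0) : x + 1 ≠ 0 := by
  intro h
  obtain rfl : x = -1 := eq_neg_of_add_eq_zero_left h
  exact one_ne_zero (α := F) (by linear_combination -hx)

theorem eq_neg_div_of_cubic (hx : x ^ 3 + s * x + s = 0) : s = -(x ^ 3 / (x + 1)) := by
  have := add_one_ne_zero_of_cubic hx
  field_simp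
  linear_combination hx

theorem div_sq_add_of_cubic_of_ne (hx : x ^ 3 + s * x + s = 0) (hz : z ^ 3 + s * z + s = 0)
    (hne : z ≠ x) : (x / z) ^ 2 + (x + 1) * (x / z) + (x + 1) = 0 := by
  have hz0 : z ≠ 0 := by
    rintro rfl
    obtain rfl : s = 0 := by simpa using hz
    exact hne (pow_eq_zero_iff three_ne_zero |>.1 (by simpa using hx)).symm
  have hquad : z ^ 2 + x * z + x ^ 2 + s = 0 :=
    mul_left_cancel₀ (sub_ne_zero.2 hne) (by linear_combination hz - hx)
  field_simp
  linear_combination (x + 1) * hquad - hx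

theorem cubic_root_unique {R : Type*} [CommRing R] [IsDomain R] [IsIntegrallyClosed R]
    [Algebra R F] [IsFractionRing R F] {a : R} (ha : Prime (a + 1))
    (hroot : algebraMap R F a ^ 3 + s * algebraMap R F a + s = 0)
    (hz : z ^ 3 + s * z + s = 0) : z = algebraMap R F a := by
  by_contra hne
  apply sq_add_mul_add_ne_zero ha (algebraMap R F a / z)
  simpa only [map_add, map_one] using div_sq_add_of_cubic_of_ne hroot hz hne

theorem transcendental_of_cubic {L : Type*} [Field L] [Algebra L F]
    (hs : Transcendental L s) (hx : x ^ 3 + s * x + s = 0) : Transcendental L x := by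
  intro halg
  apply hs
  rw [eq_neg_div_of_cubic hx, div_eq_mul_inv]
  exact ((halg.pow 3).mul (halg.add isAlgebraic_one).inv).neg

end Cubic

section RationalFunctions

variable {K L M : Type*} [Field K] [Field L] [Field M] [Algebra K M]
  [Algebra L[X] M] [IsFractionRing L[X] M]

theorem algEquiv_ext_of_coeff_of_X {σ₁ σ₂ : M ≃ₐ[K] M}
    (hC : ∀ l : L, σ₁ (algebraMap L[X] M (C l)) = σ₂ (algebraMap L[X] M (C l)))
    (hX : σ₁ (algebraMap L[X] M X) = σ₂ (algebraMap L[X] M X)) : σ₁ = σ₂ := by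
  have : (σ₁ : M →+* M) = σ₂ :=
    IsFractionRing.injective_comp_algebraMap (A := L[X]) (Polynomial.ringHom_ext hC hX)
  exact AlgEquiv.ext (RingHom.congr_fun this)

theorem stabilizer_eq_stabilizer_X_of_cubic (y : K) {t : M}
    (ht : algebraMap L[X] M X ^ 3 + (t - algebraMap K M y) * algebraMap L[X] M X +
      (t - algebraMap K M y) = 0) :
    MulAction.stabilizer (M ≃ₐ[K] M) t =
      MulAction.stabilizer (M ≃ₐ[K] M) (algebraMap L[X] M X) := by
  ext σ
  simp only [MulAction.mem_stabilizer_iff, AlgEquiv.smul_def]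
  constructor <;> intro hσ
  · have hprime : Prime (X + 1 : L[X]) := by simpa using prime_X_sub_C (-1 : L)
    apply cubic_root_unique hprime ht
    simpa [hσ] using congrArg σ ht
  · have ht' : t = algebraMap K M y - algebraMap L[X] M X ^ 3 / (algebraMap L[X] M X + 1) := by
      linear_combination eq_neg_div_of_cubic ht
    rw [ht']
    simp only [map_sub, map_div₀, map_pow, map_add, map_one, AlgEquiv.commutes, hσ]

variable [Algebra K L] [IsScalarTower K L[X] M]

variable (K L M) in
/-- The action of `Gal(L/K)` on the coefficients of a field `M = L(X)` of rational functions, given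
as a fraction field of `L[X]`. -/
noncomputable def coeffAut : (L ≃ₐ[K] L) →* (M ≃ₐ[K] M) :=
  (IsFractionRing.fieldEquivOfAlgEquivHom K M).comp
    (MulSemiringAction.toAlgAut (L ≃ₐ[K] L) K L[X])

variable (M)

theorem coeffAut_algebraMap (τ : L ≃ₐ[K] L) (p : L[X]) :
    coeffAut K L M τ (algebraMap L[X] M p) = algebraMap L[X] M (τ • p) :=
  IsFractionRing.fieldEquivOfAlgEquiv_algebraMap K M M _ p

theorem coeffAut_C (τ : L ≃ₐ[K] L) (l : L) :
    coeffAut K L M τ (algebraMap L[X] M (C l)) = algebraMap L[X] M (C (τ l)) := by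
  rw [coeffAut_algebraMap, smul_C, AlgEquiv.smul_def]

theorem coeffAut_X (τ : L ≃ₐ[K] L) :
    coeffAut K L M τ (algebraMap L[X] M X) = algebraMap L[X] M X := by
  rw [coeffAut_algebraMap, smul_X]

theorem coeffAut_injective : Function.Injective (coeffAut K L M) := by
  intro τ₁ τ₂ h
  ext l
  apply C_injective
  apply IsFractionRing.injective L[X] M
  rw [← coeffAut_C, ← coeffAut_C, h]

variable {M}

theorem exists_algebraMap_C_eq_of_isAlgebraic {z : M} (hz : IsAlgebraic K z) :
    ∃ l : L, algebraMap L[X] M (C l) = z := by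
  obtain ⟨p, rfl⟩ := IsIntegrallyClosed.algebraMap_eq_of_integral
    (hz.isIntegral.tower_top (A := L[X]))
  have hp : IsAlgebraic K p :=
    (isAlgebraic_algebraMap_iff (IsFractionRing.injective L[X] M)).1 hz
  have hdeg : p.natDegree = 0 := by
    by_contra h
    have hlead : p.leadingCoeff ≠ 0 :=
      leadingCoeff_ne_zero.2 (by rintro rfl; exact h natDegree_zero)
    exact p.transcendental h (mem_nonZeroDivisors_of_ne_zero hlead) (hp.tower_top L)
  exact ⟨p.coeff 0, by rw [← eq_C_of_natDegree_eq_zero hdeg]⟩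

theorem exists_algEquiv_coeff [Algebra.IsAlgebraic K L] (σ : M ≃ₐ[K] M) :
    ∃ τ : L ≃ₐ[K] L, ∀ l, algebraMap L[X] M (C (τ l)) = σ (algebraMap L[X] M (C l)) := by
  let ι : L →ₐ[K] M := (IsScalarTower.toAlgHom K L[X] M).comp CAlgHom
  have hmem (l : L) : σ (ι l) ∈ ι.range :=
    exists_algebraMap_C_eq_of_isAlgebraic
      (((Algebra.IsAlgebraic.isAlgebraic l).algHom ι).algHom σ.toAlgHom)
  let τ : L →ₐ[K] L := (AlgEquiv.ofInjective ι ι.injective).symm.toAlgHom.comp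
    ((σ.toAlgHom.comp ι).codRestrict ι.range hmem)
  refine ⟨(Algebra.IsAlgebraic.algEquivEquivAlgHom K L).symm τ, fun l ↦ ?_⟩
  exact congrArg Subtype.val
    ((AlgEquiv.ofInjective ι ι.injective).apply_symm_apply ⟨σ (ι l), hmem l⟩)

theorem range_coeffAut [Algebra.IsAlgebraic K L] :
    (coeffAut K L M).range = MulAction.stabilizer (M ≃ₐ[K] M) (algebraMap L[X] M X) := by
  apply le_antisymm
  · rintro _ ⟨τ, rfl⟩
    exact coeffAut_X M τ
  · intro σ hσ
    obtain ⟨τ, hτ⟩ := exists_algEquiv_coeff (L := L) σ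
    refine ⟨τ, algEquiv_ext_of_coeff_of_X (L := L) (fun l ↦ ?_) ?_⟩
    · rw [coeffAut_C, hτ]
    · exact (coeffAut_X M τ).trans hσ.symm

end RationalFunctions

section Tower

variable {K F M : Type*} [Field K] [Field F] [Field M]
  [Algebra K F] [Algebra F M] [Algebra K M] [IsScalarTower K F M] {t : F}

theorem range_restrictScalarsHom_of_adjoin_eq_top (htop : K⟮t⟯ = ⊤) :
    (AlgEquiv.restrictScalarsHom K : (M ≃ₐ[F] M) →* (M ≃ₐ[K] M)).range =
      MulAction.stabilizer (M ≃ₐ[K] M) (algebraMap F M t) := by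
  apply le_antisymm
  · rintro _ ⟨σ, rfl⟩
    exact σ.commutes t
  · intro σ hσ
    have hmem (r : F) : algebraMap F M r ∈ K⟮algebraMap F M t⟯ := by
      have := adjoin_map K {t} (IsScalarTower.toAlgHom K F M)
      rw [htop, Set.image_singleton] at this
      exact this.le ⟨r, trivial, rfl⟩
    have hfix : ∀ m ∈ K⟮algebraMap F M t⟯, σ • m = m :=
      (forall_mem_adjoin_smul_eq_self_iff K σ).2 (by simpa using hσ)
    exact ⟨.ofRingEquiv (f := (σ : M ≃+* M)) fun r ↦ hfix _ (hmem r), rfl⟩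

variable {L : Type*} [Field L] [Algebra L[X] M] [IsFractionRing L[X] M]

theorem range_restrictScalarsHom_of_cubic (y : K) (htop : K⟮t⟯ = ⊤)
    (ht : algebraMap L[X] M X ^ 3 + (algebraMap F M t - algebraMap K M y) * algebraMap L[X] M X +
      (algebraMap F M t - algebraMap K M y) = 0) :
    (AlgEquiv.restrictScalarsHom K : (M ≃ₐ[F] M) →* (M ≃ₐ[K] M)).range =
      MulAction.stabilizer (M ≃ₐ[K] M) (algebraMap L[X] M X) := by
  rw [range_restrictScalarsHom_of_adjoin_eq_top htop, stabilizer_eq_stabilizer_X_of_cubic y ht]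

theorem nonempty_mulEquiv_of_range_eq_stabilizer_X [Algebra K L] [Algebra.IsAlgebraic K L]
    [IsScalarTower K L[X] M]
    (h : (AlgEquiv.restrictScalarsHom K : (M ≃ₐ[F] M) →* (M ≃ₐ[K] M)).range =
      MulAction.stabilizer (M ≃ₐ[K] M) (algebraMap L[X] M X)) :
    Nonempty ((M ≃ₐ[F] M) ≃* (L ≃ₐ[K] L)) :=
  ⟨(MonoidHom.ofInjective (AlgEquiv.restrictScalarsHom_injective K)).trans
    ((MulEquiv.subgroupCongr (h.trans range_coeffAut.symm)).trans
      (MonoidHom.ofInjective (coeffAut_injective M)).symm)⟩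

end Tower

section Adjoin

variable {K L Ω : Type*} [Field K] [Field L] [Field Ω] [Algebra L Ω]

theorem isFractionRing_of_forall_mem_adjoin {M : Type*} [Field M] [Algebra L[X] M] [Algebra M Ω]
    {x : Ω} (hx : Transcendental L x)
    (haeval : ∀ p : L[X], algebraMap M Ω (algebraMap L[X] M p) = aeval x p)
    (hmem : ∀ z : M, algebraMap M Ω z ∈ L⟮x⟯) : IsFractionRing L[X] M := by
  have : FaithfulSMul L[X] M := by
    rw [faithfulSMul_iff_algebraMap_injective]
    intro p q hpq
    apply transcendental_iff_injective.1 hx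
    rw [← haeval, ← haeval, hpq]
  refine .of_field L[X] M fun z ↦ ?_
  obtain ⟨p, q, hpq⟩ := (mem_adjoin_simple_iff L _).1 (hmem z)
  refine ⟨p, q, (algebraMap M Ω).injective ?_⟩
  rw [hpq, map_div₀, haeval, haeval]

variable [Algebra K L] [Algebra K Ω] [IsScalarTower K L Ω]

theorem adjoin_range_algebraMap_union (S : Set Ω) :
    adjoin K (Set.range (algebraMap L Ω) ∪ S) = (adjoin L S).restrictScalars K := by
  have hrange : Set.range (algebraMap L Ω) ⊆ adjoin L S := by
    rintro _ ⟨l, rfl⟩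
    exact (adjoin L S).algebraMap_mem l
  apply le_antisymm
  · exact adjoin_le_iff.2 (Set.union_subset hrange (subset_adjoin L S))
  · change (adjoin L S).toSubfield ≤ (adjoin K (Set.range (algebraMap L Ω) ∪ S)).toSubfield
    exact Subfield.closure_le.2 (subset_adjoin K _)

theorem mem_adjoin_simple_of_cubic {T x : Ω} (y : K)
    (hx : x ^ 3 + (T - algebraMap K Ω y) * x + (T - algebraMap K Ω y) = 0) : T ∈ L⟮x⟯ := by
  have hT : T = algebraMap L Ω (algebraMap K L y) - x ^ 3 / (x + 1) := by
    rw [← IsScalarTower.algebraMap_apply]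
    linear_combination eq_neg_div_of_cubic hx
  have hxmem := mem_adjoin_simple_self L x
  rw [hT]
  exact sub_mem (L⟮x⟯.algebraMap_mem _) (div_mem (pow_mem hxmem 3) (add_mem hxmem (one_mem _)))

theorem adjoin_pair_of_mem {T x : Ω} (hT : T ∈ L⟮x⟯) : L⟮T, x⟯ = L⟮x⟯ :=
  le_antisymm (adjoin_le_iff.2 (Set.insert_subset hT (by simp)))
    (adjoin.mono _ _ _ (Set.subset_insert T {x}))

end Adjoin

theorem adjoin_simple_eq_top_of_eq {K Ω : Type*} [Field K] [Field Ω] [Algebra K Ω]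
    {F : IntermediateField K Ω} (t : F) (hF : F = K⟮(t : Ω)⟯) : K⟮t⟯ = ⊤ :=
  lift_injective F (by rw [lift_adjoin_simple, lift_top, ← hF])

theorem aut_of_compositum_general {K L Ω : Type*} [Field K] [Field L] [Field Ω]
    [Algebra K L] [Algebra L Ω] [Algebra K Ω] [IsScalarTower K L Ω] [Algebra.IsAlgebraic K L]
    (y : K) {T x : Ω} (hT : Transcendental L T)
    (hx : x ^ 3 + (T - algebraMap K Ω y) * x + (T - algebraMap K Ω y) = 0)
    {KT E : IntermediateField K Ω} (hKT : KT = K⟮T⟯)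
    (hE : E = adjoin K (Set.range (algebraMap L Ω) ∪ {T, x}))
    (hle : KT ≤ E) (hxE : x ∈ extendScalars hle) :
    (∀ σ : extendScalars hle ≃ₐ[KT] extendScalars hle, σ ⟨x, hxE⟩ = ⟨x, hxE⟩) ∧
      Nonempty ((extendScalars hle ≃ₐ[KT] extendScalars hle) ≃* (L ≃ₐ[K] L)) := by
  rw [adjoin_range_algebraMap_union, adjoin_pair_of_mem (mem_adjoin_simple_of_cubic y hx)] at hE
  have hsub : Transcendental L (T - algebraMap K Ω y) := by
    rw [IsScalarTower.algebraMap_apply K L Ω]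
    exact fun h ↦ hT (by simpa using h.add (isAlgebraic_algebraMap (algebraMap K L y)))
  have hmem (p : L[X]) : aeval x p ∈ E :=
    hE.ge (algebra_adjoin_le_adjoin L _ (aeval_mem_adjoin_singleton L x))
  let evalX : L[X] →ₐ[K] extendScalars hle :=
    ((aeval x).restrictScalars K).codRestrict E.toSubalgebra hmem
  let : Algebra L[X] (extendScalars hle) := evalX.toRingHom.toAlgebra
  have : IsScalarTower K L[X] (extendScalars hle) := .of_algHom evalX
  have : IsFractionRing L[X] (extendScalars hle) :=
    isFractionRing_of_forall_mem_adjoin (transcendental_of_cubic hsub hx) (fun _ ↦ rfl)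
      fun z ↦ hE.le z.2
  have hX : algebraMap L[X] (extendScalars hle) X = ⟨x, hxE⟩ := Subtype.ext (aeval_X x)
  let t : KT := ⟨T, hKT.ge (mem_adjoin_simple_self K T)⟩
  have htop : K⟮t⟯ = ⊤ := adjoin_simple_eq_top_of_eq t hKT
  have hrange := range_restrictScalarsHom_of_cubic (M := extendScalars hle) (L := L) y htop
    (by rw [hX]; exact Subtype.ext hx)
  exact ⟨fun σ ↦ hX ▸ hrange.le ⟨σ, rfl⟩, nonempty_mulEquiv_of_range_eq_stabilizer_X hrange⟩

/-- Let `L/K` be finite Galois, `K = k₀(y)`, and `x` a root of `X^3 + (T−y)X + (T−y)` in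
an algebraic closure `Ω` of `L(T)`. With `E = L(T, x)`, every automorphism of `E` fixing
`K(T)` pointwise fixes `x`, and `Aut(E/K(T)) ≅ Gal(L/K)`. -/
theorem aut_of_compositum (K L : Type*) [Field K] [Field L] [Algebra K L]
    [FiniteDimensional K L] [IsGalois K L]
    (y : K) (k₀ : Subfield K) (hk₀ : adjoin k₀ {y} = (⊤ : IntermediateField k₀ K))
    (x : AlgebraicClosure (RatFunc L))
    (hx : aeval x (X ^ 3 + C (RatFunc.X - algebraMap K (RatFunc L) y) * X +
      C (RatFunc.X - algebraMap K (RatFunc L) y) : Polynomial (RatFunc L)) = 0)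
    -- `K(T)`, as an intermediate field of `Ω/K`
    (KT : IntermediateField K (AlgebraicClosure (RatFunc L)))
    (hKT : KT = adjoin K {algebraMap (RatFunc L) (AlgebraicClosure (RatFunc L)) RatFunc.X})
    -- `E = L(T, x)`, as an intermediate field of `Ω/K`
    (E : IntermediateField K (AlgebraicClosure (RatFunc L)))
    (hE : E = adjoin K (Set.range (algebraMap L (AlgebraicClosure (RatFunc L))) ∪
      {algebraMap (RatFunc L) (AlgebraicClosure (RatFunc L)) RatFunc.X, x}))
    (hle : KT ≤ E) (hxE : x ∈ extendScalars hle) :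
    (∀ σ : extendScalars hle ≃ₐ[KT] extendScalars hle, σ ⟨x, hxE⟩ = ⟨x, hxE⟩) ∧
      Nonempty ((extendScalars hle ≃ₐ[KT] extendScalars hle) ≃* (L ≃ₐ[K] L)) :=
  aut_of_compositum_general y
    ((transcendental_algebraMap_iff (algebraMap (RatFunc L) _).injective).2
      RatFunc.transcendental_X)
    (by simpa [← IsScalarTower.algebraMap_apply] using hx) hKT hE hle hxE
end
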